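/- arXiv:1509.03460 — 2 statements merged into one kernel-verified Lean document; each statement's English description precedes it below -/
import Mathlib

section
/- Let Γ be a finite-dimensional algebra of global dimension at most 2 admitting a tilting module Y (projective dimension ≤ 1, Ext¹(Y,Y)=0, and number of non-isomorphic indecomposable summands equal to the number of simple Γ-modules) which is generated and cogenerated by a projective-injective module. Then Γ has dominant dimension at least 2. -/
open CategoryTheory Limits

universe u

variable {K Γ : Type u} [Field K] [Ring Γ] [Algebra K Γ]

/-- The setoid of isomorphism on a class of modules, used to count isomorphism classes. -/
def modIsoSetoid (P : ModuleCat.{u} Γ → Prop) : Setoid {M : ModuleCat.{u} Γ // P M} :=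
  ⟨fun X Y => Nonempty (X.1 ≅ Y.1),
    ⟨fun _ => ⟨Iso.refl _⟩, fun ⟨h⟩ => ⟨h.symm⟩, fun ⟨h⟩ ⟨h'⟩ => ⟨h ≪≫ h'⟩⟩⟩

/-- The type of isomorphism classes of modules satisfying a property `P`. -/
def ModIsoClasses (P : ModuleCat.{u} Γ → Prop) : Type (u + 1) :=
  Quotient (modIsoSetoid P)

/-- An object is indecomposable if it is non-zero and not a biproduct of two
non-zero objects. -/
def IsIndecomposableMod (X : ModuleCat.{u} Γ) : Prop :=
  ¬ IsZero X ∧ ∀ (Y Z : ModuleCat.{u} Γ), Nonempty (X ≅ Y ⊞ Z) → IsZero Y ∨ IsZero Z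

/-- `Z` is a direct summand of `Y`. -/
def IsSummand (Z Y : ModuleCat.{u} Γ) : Prop :=
  ∃ (ι : Z ⟶ Y) (ρ : Y ⟶ Z), ι ≫ ρ = 𝟙 Z

namespace DomDim

variable {R : Type u} [Ring R]

/-- Indecomposability of an unbundled module, in terms of complemented submodules. -/
def Indec (R : Type u) [Ring R] (M : Type u) [AddCommGroup M] [Module R M] : Prop :=
  Nontrivial M ∧ ∀ p q : Submodule R M, IsCompl p q → p = ⊥ ∨ q = ⊥

/-- `P` is the kernel of a map between projective-injective modules. -/
def Good (R : Type u) [Ring R] (P : Type u) [AddCommGroup P] [Module R P] : Prop :=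
  ∃ Q' Q'' : ModuleCat.{u} R, Module.Projective R Q' ∧ Module.Injective R Q' ∧
    Module.Projective R Q'' ∧ Module.Injective R Q'' ∧
    ∃ (ι : P →ₗ[R] Q') (θ : Q' →ₗ[R] Q''), Function.Injective ι ∧ Function.Exact ι θ

section basics

variable {M N P : Type u} [AddCommGroup M] [Module R M] [AddCommGroup N] [Module R N]
  [AddCommGroup P] [Module R P]

theorem isCompl_of_retract (i : N →ₗ[R] M) (r : M →ₗ[R] N) (h : r ∘ₗ i = LinearMap.id) :
    IsCompl (LinearMap.range i) (LinearMap.ker r) := by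
  have h' : ∀ x, r (i x) = x := fun x => LinearMap.congr_fun h x
  refine ⟨Submodule.disjoint_def.2 ?_, codisjoint_iff.2 (eq_top_iff.2 fun x _ => ?_)⟩
  · rintro _ ⟨y, rfl⟩ hy
    have : r (i y) = 0 := hy
    rw [h'] at this
    simp [this]
  · refine Submodule.mem_sup.2 ⟨i (r x), ⟨_, rfl⟩, x - i (r x), ?_, by abel⟩
    simp [LinearMap.mem_ker, h']

theorem exists_retract_of_isCompl {p q : Submodule R M} (h : IsCompl p q) :
    ∃ r : M →ₗ[R] p, (∀ x : p, r x = x) ∧ LinearMap.ker r = q :=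
  ⟨p.projectionOnto q h, fun x => by simp, by simp⟩

theorem injective_of_retract (i : N →ₗ[R] M) (r : M →ₗ[R] N) (h : ∀ x, r (i x) = x)
    (hM : Module.Injective R M) : Module.Injective R N where
  out X Y _ _ _ _ f hf g := by
    obtain ⟨k, hk⟩ := hM.out f hf (i ∘ₗ g)
    exact ⟨r ∘ₗ k, fun x => by simp [hk, h]⟩

theorem projective_of_retract (i : N →ₗ[R] M) (r : M →ₗ[R] N) (h : ∀ x, r (i x) = x)
    (hM : Module.Projective R M) : Module.Projective R N :=
  Module.Projective.of_split i r (LinearMap.ext h)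

theorem injective_of_equiv (e : N ≃ₗ[R] M) (hM : Module.Injective R M) : Module.Injective R N :=
  injective_of_retract e.toLinearMap e.symm.toLinearMap (by simp) hM

theorem injective_prod (hM : Module.Injective R M) (hN : Module.Injective R N) :
    Module.Injective R (M × N) where
  out X Y _ _ _ _ f hf g := by
    obtain ⟨k, hk⟩ := hM.out f hf (LinearMap.fst R M N ∘ₗ g)
    obtain ⟨l, hl⟩ := hN.out f hf (LinearMap.snd R M N ∘ₗ g)
    exact ⟨k.prod l, fun x => by ext <;> simp [hk, hl]⟩

theorem Good.of_equiv (e : N ≃ₗ[R] M) (h : Good R M) : Good R N := by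
  obtain ⟨Q', Q'', h1, h2, h3, h4, ι, θ, hi, he⟩ := h
  refine ⟨Q', Q'', h1, h2, h3, h4, ι ∘ₗ e.toLinearMap, θ, hi.comp e.injective, fun x => ?_⟩
  rw [he x]
  constructor
  · rintro ⟨y, rfl⟩; exact ⟨e.symm y, by simp⟩
  · rintro ⟨y, rfl⟩; exact ⟨e y, rfl⟩

theorem Good.prod (hM : Good R M) (hN : Good R N) : Good R (M × N) := by
  obtain ⟨Q', Q'', h1, h2, h3, h4, ι, θ, hi, he⟩ := hM
  obtain ⟨W', W'', k1, k2, k3, k4, ι', θ', hi', he'⟩ := hN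
  refine ⟨ModuleCat.of R (Q' × W'), ModuleCat.of R (Q'' × W''), ?_, ?_, ?_, ?_,
    ι.prodMap ι', θ.prodMap θ', ?_, ?_⟩
  · exact inferInstanceAs (Module.Projective R (Q' × W'))
  · exact injective_prod h2 k2
  · exact inferInstanceAs (Module.Projective R (Q'' × W''))
  · exact injective_prod h4 k4
  · exact Function.Injective.prodMap hi hi'
  · rintro ⟨x, y⟩
    constructor
    · intro h
      have hx : θ x = 0 := congrArg Prod.fst h
      have hy : θ' y = 0 := congrArg Prod.snd h
      obtain ⟨a, rfl⟩ := (he x).1 hx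
      obtain ⟨b, rfl⟩ := (he' y).1 hy
      exact ⟨(a, b), rfl⟩
    · rintro ⟨⟨a, b⟩, h⟩
      have hx : ι a = x := congrArg Prod.fst h
      have hy : ι' b = y := congrArg Prod.snd h
      refine Prod.ext ?_ ?_
      · exact (he x).2 ⟨a, hx⟩
      · exact (he' y).2 ⟨b, hy⟩

theorem Good.of_subsingleton (h : Subsingleton M) : Good R M :=
  ⟨ModuleCat.of R PUnit.{u + 1}, ModuleCat.of R PUnit.{u + 1}, inferInstanceAs (Module.Projective R PUnit.{u + 1}),
    ⟨fun _ _ _ _ _ _ _ _ _ => ⟨0, fun _ => rfl⟩⟩, inferInstanceAs (Module.Projective R PUnit.{u + 1}),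
    ⟨fun _ _ _ _ _ _ _ _ _ => ⟨0, fun _ => rfl⟩⟩, 0, 0,
    fun _ _ _ => Subsingleton.elim _ _, fun _ => ⟨fun _ => ⟨0, rfl⟩, fun _ => rfl⟩⟩

theorem Indec.of_equiv (e : N ≃ₗ[R] M) (h : Indec R M) : Indec R N := by
  refine ⟨?_, fun p q hpq => ?_⟩
  · have := h.1
    exact e.toEquiv.nontrivial
  · have := h.2 _ _ ((Submodule.orderIsoMapComap e).isCompl hpq)
    simpa using this

/-- Fitting's lemma: an endomorphism of an indecomposable finite length module that lifts the
identity of a nonzero quotient is bijective. -/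
theorem bijective_of_fix [IsNoetherian R M] [IsArtinian R M] (hM : Indec R M)
    (f : M →ₗ[R] M) (p : M →ₗ[R] P) (hp : p ≠ 0) (hf : p ∘ₗ f = p) : Function.Bijective f := by
  obtain ⟨n, hn⟩ := Filter.eventually_atTop.1 (LinearMap.eventually_isCompl_ker_pow_range_pow f)
  have h1 := hn (n + 1) (by omega)
  have hpow : ∀ m : ℕ, ∀ x, p ((f ^ m) x) = p x := by
    intro m
    induction m with
    | zero => intro x; simp
    | succ k ih =>
      intro x
      rw [pow_succ, Module.End.mul_apply, ih]
      exact LinearMap.congr_fun hf x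
  rcases hM.2 _ _ h1 with h | h
  · have htop : LinearMap.range (f ^ (n + 1)) = ⊤ := by
      have := h1.sup_eq_top
      rwa [h, bot_sup_eq] at this
    constructor
    · rw [← LinearMap.ker_eq_bot, eq_bot_iff, ← h]
      intro x hx
      have : f x = 0 := hx
      rw [LinearMap.mem_ker, pow_succ, Module.End.mul_apply, this, map_zero]
    · intro y
      obtain ⟨x, hx⟩ : y ∈ LinearMap.range (f ^ (n + 1)) := htop ▸ trivial
      exact ⟨(f ^ n) x, by rw [← hx, pow_succ', Module.End.mul_apply]⟩
  · exfalso
    apply hp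
    ext x
    have hx : (f ^ (n + 1)) x ∈ LinearMap.range (f ^ (n + 1)) := ⟨x, rfl⟩
    rw [h, Submodule.mem_bot] at hx
    rw [← hpow (n + 1) x, hx]; simp

/-- If `N` is an indecomposable projective of finite length, sharing with a projective `P`
a simple quotient, then `N` is a retract of `P`. -/
theorem retract_of_common_quotient {S : Type u} [AddCommGroup S] [Module R S]
    [IsNoetherian R N] [IsArtinian R N] (hN : Indec R N)
    (hNp : Module.Projective R N) (hPp : Module.Projective R P) (a : N →ₗ[R] S) (p : P →ₗ[R] S)
    (ha : Function.Surjective a) (hp : Function.Surjective p) (hS : Nontrivial S) :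
    ∃ (i : N →ₗ[R] P) (r : P →ₗ[R] N), ∀ x, r (i x) = x := by
  obtain ⟨i, hi⟩ := Module.projective_lifting_property p a hp
  obtain ⟨r, hr⟩ := Module.projective_lifting_property a p ha
  have ha0 : a ≠ 0 := by
    rintro rfl
    obtain ⟨x, hx⟩ := exists_ne (0 : S)
    obtain ⟨y, hy⟩ := ha x
    exact hx (by simpa using hy.symm)
  have hb := bijective_of_fix hN (r ∘ₗ i) a ha0 (by rw [← LinearMap.comp_assoc, hr, hi])
  let e := LinearEquiv.ofBijective (r ∘ₗ i) hb
  refine ⟨i, e.symm.toLinearMap ∘ₗ r, fun x => ?_⟩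
  have : e x = r (i x) := rfl
  simp [← this]

/-- A retract (nonzero) of an indecomposable is isomorphic to it. -/
theorem Indec.equiv_of_retract (hM : Indec R M) (hN : Nontrivial N) (i : N →ₗ[R] M)
    (r : M →ₗ[R] N) (h : ∀ x, r (i x) = x) : Nonempty (N ≃ₗ[R] M) := by
  have hc := isCompl_of_retract i r (LinearMap.ext h)
  have hinj : Function.Injective i := Function.LeftInverse.injective h
  rcases hM.2 _ _ hc with h0 | h0
  · exfalso
    obtain ⟨x, hx⟩ := exists_ne (0 : N)
    have : i x ∈ LinearMap.range i := ⟨x, rfl⟩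
    rw [h0, Submodule.mem_bot] at this
    exact hx (hinj (by simp [this]))
  · have : LinearMap.range i = ⊤ := by
      have := hc.sup_eq_top
      rwa [h0, sup_bot_eq] at this
    exact ⟨LinearEquiv.ofBijective i ⟨hinj, LinearMap.range_eq_top.1 this⟩⟩

end basics

/-- Every nonzero module over a semiprimary ring has a simple quotient. -/
theorem exists_simple_quotient [IsArtinianRing R] (M : Type u) [AddCommGroup M] [Module R M]
    (hM : Nontrivial M) : ∃ (S : ModuleCat.{u} R) (f : M →ₗ[R] S), IsSimpleModule R S ∧
      Function.Surjective f := by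
  revert hM
  refine IsSemiprimaryRing.induction ℤ R M (P := fun M _ _ _ => Nontrivial M →
    ∃ (S : ModuleCat.{u} R) (f : M →ₗ[R] S), IsSimpleModule R S ∧ Function.Surjective f) ?_ ?_
  · intro M _ _ _ _ _ _ hM
    obtain ⟨m, hm, -⟩ := (eq_top_or_exists_le_coatom (⊥ : Submodule R M)).resolve_left
      bot_ne_top
    exact ⟨ModuleCat.of R (M ⧸ m), m.mkQ, isSimpleModule_iff_isCoatom.2 hm, m.mkQ_surjective⟩
  · intro M _ _ _ _ N h1 h2 hM
    by_cases hN : N = ⊤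
    · have e : N ≃ₗ[R] M := LinearEquiv.ofTop N hN
      obtain ⟨S, f, hS, hf⟩ := h1 e.toEquiv.nontrivial
      exact ⟨S, f ∘ₗ e.symm.toLinearMap, hS, hf.comp e.symm.surjective⟩
    · obtain ⟨S, f, hS, hf⟩ := h2 (Submodule.Quotient.nontrivial_iff.2 hN)
      exact ⟨S, f ∘ₗ N.mkQ, hS, hf.comp N.mkQ_surjective⟩

/-- There are finitely many isomorphism classes of simple modules. -/
theorem exists_finite_simple_invariant (R : Type u) [Ring R] [IsArtinianRing R] :
    ∃ (T : Type u) (_ : Finite T) (F : ModuleCat.{u} R → T → Prop),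
      (∀ S : ModuleCat.{u} R, IsSimpleModule R S → ∃ t, F S t) ∧
      (∀ (S S' : ModuleCat.{u} R) t, IsSimpleModule R S → IsSimpleModule R S' → F S t → F S' t →
        Nonempty (S ≃ₗ[R] S')) := by
  let J := Ring.jacobson R
  have hJ : Module.IsTorsionBySet R (R ⧸ J) J := by
    rw [Module.isTorsionBySet_quotient_iff]
    intro m i hi
    exact Ideal.mul_mem_right _ _ hi
  have hss : IsSemisimpleModule R (R ⧸ J) := by
    let _ := hJ.module
    exact (hJ.semilinearMap.isSemisimpleModule_iff_of_bijective Function.bijective_id).2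
      inferInstance
  have hsub : ∀ S : ModuleCat.{u} R, IsSimpleModule R S →
      ∃ N : Submodule R (R ⧸ J), Nonempty (N ≃ₗ[R] S) := by
    intro S hS
    have := IsSimpleModule.nontrivial R S
    obtain ⟨x, hx⟩ := exists_ne (0 : S)
    have hsurj := IsSimpleModule.toSpanSingleton_surjective R hx
    have hle : J ≤ LinearMap.ker (LinearMap.toSpanSingleton R S x) := by
      intro r hr
      have := IsSemisimpleModule.jacobson_le_annihilator R S hr
      rw [Module.mem_annihilator] at this
      simpa using this x
    let f := J.liftQ (LinearMap.toSpanSingleton R S x) hle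
    have hf : Function.Surjective f := fun y => by
      obtain ⟨r, rfl⟩ := hsurj y
      exact ⟨Submodule.Quotient.mk r, Submodule.liftQ_apply J _ r⟩
    obtain ⟨N, ⟨e⟩⟩ := IsSemisimpleModule.exists_submodule_linearEquiv_quotient (LinearMap.ker f)
    exact ⟨N, ⟨e.trans (f.quotKerEquivOfSurjective hf)⟩⟩
  refine ⟨isotypicComponents R (R ⧸ J), inferInstance,
    fun S t => isotypicComponent R (R ⧸ J) S = t, ?_, ?_⟩
  · intro S hS
    obtain ⟨N, ⟨e⟩⟩ := hsub S hS
    exact ⟨⟨_, N, IsSimpleModule.congr e, rfl⟩, e.symm.isotypicComponent_eq⟩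
  · intro S S' t hS hS' h h'
    obtain ⟨N, ⟨e⟩⟩ := hsub S hS
    obtain ⟨N', ⟨e'⟩⟩ := hsub S' hS'
    have := IsSimpleModule.congr e
    have := IsSimpleModule.congr e'
    have hle : N ≤ isotypicComponent R (R ⧸ J) N' := by
      rw [e'.isotypicComponent_eq, h', ← h, ← e.isotypicComponent_eq]
      exact N.le_isotypicComponent
    obtain ⟨k⟩ := isIsotypicOfType_submodule_iff.mp (.isotypicComponent R (R ⧸ J) N') _ hle
    exact ⟨e.symm.trans (k.trans e')⟩

end DomDim

namespace DomDim
variable {R : Type u} [Ring R]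

/-- The internal direct sum of two disjoint submodules. -/
noncomputable def prodEquivSup {M : Type u} [AddCommGroup M] [Module R M] {A B : Submodule R M}
    (h : Disjoint A B) : (A × B) ≃ₗ[R] (A ⊔ B : Submodule R M) :=
  LinearEquiv.ofBijective
    ((Submodule.inclusion le_sup_left).coprod (Submodule.inclusion le_sup_right)) <| by
    constructor
    · rw [← LinearMap.ker_eq_bot, LinearMap.ker_eq_bot']
      rintro ⟨⟨a, ha⟩, ⟨b, hb⟩⟩ h0
      have h0' : a + b = 0 := congrArg Subtype.val h0
      have ha' : a = 0 := Submodule.disjoint_def.1 h a ha (by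
        rw [eq_neg_of_add_eq_zero_left h0']; exact B.neg_mem hb)
      subst ha'
      rw [zero_add] at h0'
      subst h0'
      rfl
    · rintro ⟨x, hx⟩
      obtain ⟨a, ha, b, hb, rfl⟩ := Submodule.mem_sup.1 hx
      exact ⟨(⟨a, ha⟩, ⟨b, hb⟩), rfl⟩

/-- A principal indecomposable module, as a left ideal. -/
def PIM (N : Submodule R R) : Prop := IsComplemented N ∧ Indec R N

/-- Pass from a decomposition of a complemented submodule `N` to complemented submodules. -/
theorem split_submodule {M : Type u} [AddCommGroup M] [Module R M] {N : Submodule R M}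
    (hN : IsComplemented N) (h0 : N ≠ ⊥) (hI : ¬ Indec R N) :
    ∃ A B : Submodule R M, IsComplemented A ∧ IsComplemented B ∧ A < N ∧ B < N ∧ A ⊔ B = N ∧
      Disjoint A B := by
  obtain ⟨C, hC⟩ := hN
  have hnt : Nontrivial N := Submodule.nontrivial_iff_ne_bot.2 h0
  have : ∃ p q : Submodule R N, IsCompl p q ∧ p ≠ ⊥ ∧ q ≠ ⊥ := by
    by_contra hcon
    push Not at hcon
    exact hI ⟨hnt, fun p q hpq => by
      by_cases hp : p = ⊥
      · exact Or.inl hp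
      · exact Or.inr (hcon p q hpq hp)⟩
  obtain ⟨p, q, hpq, hp, hq⟩ := this
  have hinj : Function.Injective N.subtype := N.injective_subtype
  have hsup : p.map N.subtype ⊔ q.map N.subtype = N := by
    rw [← Submodule.map_sup, hpq.sup_eq_top, Submodule.map_subtype_top]
  have hdis : Disjoint (p.map N.subtype) (q.map N.subtype) :=
    Submodule.disjoint_map hinj hpq.disjoint
  have hA : p.map N.subtype ≤ N := Submodule.map_subtype_le _ _
  have hB : q.map N.subtype ≤ N := Submodule.map_subtype_le _ _
  have hpb : p.map N.subtype ≠ ⊥ := fun h => hp (Submodule.map_injective_of_injective hinj (by rw [h, Submodule.map_bot]))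
  have hqb : q.map N.subtype ≠ ⊥ := fun h => hq (Submodule.map_injective_of_injective hinj (by rw [h, Submodule.map_bot]))
  refine ⟨p.map N.subtype, q.map N.subtype, ⟨q.map N.subtype ⊔ C, ?_, ?_⟩,
    ⟨p.map N.subtype ⊔ C, ?_, ?_⟩, ?_, ?_, hsup, hdis⟩
  · exact hdis.disjoint_sup_right_of_disjoint_sup_left (by rw [hsup]; exact hC.disjoint)
  · rw [codisjoint_iff, ← sup_assoc, hsup, hC.sup_eq_top]
  · exact hdis.symm.disjoint_sup_right_of_disjoint_sup_left
      (by rw [sup_comm, hsup]; exact hC.disjoint)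
  · rw [codisjoint_iff, ← sup_assoc, sup_comm (q.map N.subtype), hsup, hC.sup_eq_top]
  · refine lt_of_le_of_ne hA fun h => hqb ?_
    rw [h] at hdis
    exact hdis.symm.eq_bot_of_le hB
  · refine lt_of_le_of_ne hB fun h => hpb ?_
    rw [h] at hdis
    exact hdis.eq_bot_of_le hA

theorem good_of_pim [IsArtinianRing R] (h : ∀ N : Submodule R R, PIM N → Good R N) : Good R R := by
  have key : ∀ N : Submodule R R, IsComplemented N → Good R N := by
    intro N
    induction N using WellFoundedLT.induction with
    | ind N ih =>
      intro hN
      by_cases h0 : N = ⊥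
      · subst h0; exact Good.of_subsingleton inferInstance
      by_cases hI : Indec R N
      · exact h N ⟨hN, hI⟩
      obtain ⟨A, B, hA, hB, hAN, hBN, hsup, hdis⟩ := split_submodule hN h0 hI
      have := (ih A hAN hA).prod (ih B hBN hB)
      subst hsup
      exact this.of_equiv (prodEquivSup hdis).symm
  exact (key ⊤ isComplemented_top).of_equiv Submodule.topEquiv.symm

theorem exists_pim_map_ne_zero [IsArtinianRing R] {S : Type u} [AddCommGroup S] [Module R S]
    (f : R →ₗ[R] S) (hf : f ≠ 0) : ∃ N : Submodule R R, PIM N ∧ f ∘ₗ N.subtype ≠ 0 := by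
  have key : ∀ N : Submodule R R, IsComplemented N → f ∘ₗ N.subtype ≠ 0 →
      ∃ N : Submodule R R, PIM N ∧ f ∘ₗ N.subtype ≠ 0 := by
    intro N
    induction N using WellFoundedLT.induction with
    | ind N ih =>
      intro hN hfN
      by_cases h0 : N = ⊥
      · subst h0; exact absurd (Subsingleton.elim _ _) hfN
      by_cases hI : Indec R N
      · exact ⟨N, ⟨hN, hI⟩, hfN⟩
      obtain ⟨A, B, hA, hB, hAN, hBN, hsup, hdis⟩ := split_submodule hN h0 hI
      by_cases h1 : f ∘ₗ A.subtype = 0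
      · by_cases h2 : f ∘ₗ B.subtype = 0
        · exfalso
          apply hfN
          ext ⟨x, hx⟩
          rw [← hsup] at hx
          obtain ⟨a, ha, b, hb, rfl⟩ := Submodule.mem_sup.1 hx
          have e1 : f a = 0 := LinearMap.congr_fun h1 ⟨a, ha⟩
          have e2 : f b = 0 := LinearMap.congr_fun h2 ⟨b, hb⟩
          simp [map_add f a b, e1, e2]
        · exact ih B hBN hB h2
      · exact ih A hAN hA h1
  refine key ⊤ isComplemented_top fun h => hf ?_
  ext
  exact LinearMap.congr_fun h ⟨1, trivial⟩

theorem PIM.projective {N : Submodule R R} (hN : PIM N) : Module.Projective R N := by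
  obtain ⟨⟨C, hC⟩, -⟩ := hN
  obtain ⟨r, hr, -⟩ := exists_retract_of_isCompl hC
  exact projective_of_retract N.subtype r (fun x => hr x) inferInstance

theorem exists_pim_surj [IsArtinianRing R] {S : Type u} [AddCommGroup S] [Module R S]
    [IsSimpleModule R S] : ∃ (N : Submodule R R) (f : N →ₗ[R] S), PIM N ∧ Function.Surjective f := by
  have := IsSimpleModule.nontrivial R S
  obtain ⟨x, hx⟩ := exists_ne (0 : S)
  obtain ⟨N, hN, hf⟩ := exists_pim_map_ne_zero (LinearMap.toSpanSingleton R S x)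
    (fun h => hx (by simpa using LinearMap.congr_fun h 1))
  exact ⟨N, _, hN, LinearMap.surjective_of_ne_zero hf⟩

/-- Every nonzero projective has a principal indecomposable retract. -/
theorem exists_pim_retract [IsArtinianRing R] (P : Type u) [AddCommGroup P] [Module R P]
    (hP : Module.Projective R P) (h0 : Nontrivial P) :
    ∃ (N : Submodule R R) (i : N →ₗ[R] P) (r : P →ₗ[R] N), PIM N ∧ ∀ x, r (i x) = x := by
  obtain ⟨S, p, hS, hp⟩ := exists_simple_quotient (R := R) P h0
  obtain ⟨N, a, hN, ha⟩ := exists_pim_surj (R := R) (S := S)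
  obtain ⟨i, r, h⟩ := retract_of_common_quotient hN.2 hN.projective hP a p ha hp
    (IsSimpleModule.nontrivial R S)
  exact ⟨N, i, r, hN, h⟩

/-- Two principal indecomposables with a common simple quotient are isomorphic. -/
theorem PIM.equiv_of_common_quotient [IsArtinianRing R] {N N' : Submodule R R} (hN : PIM N)
    (hN' : PIM N') {S : Type u} [AddCommGroup S] [Module R S] [IsSimpleModule R S]
    (a : N →ₗ[R] S) (a' : N' →ₗ[R] S) (ha : Function.Surjective a)
    (ha' : Function.Surjective a') : Nonempty (N ≃ₗ[R] N') := by
  obtain ⟨i, r, h⟩ := retract_of_common_quotient hN.2 hN.projective hN'.projective a a' ha ha'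
    (IsSimpleModule.nontrivial R S)
  exact hN'.2.equiv_of_retract hN.2.1 i r h

/-- A module over a noetherian ring has a maximal injective submodule. -/
theorem exists_maximal_injective [IsNoetherianRing R] (P : Type u) [AddCommGroup P] [Module R P] :
    ∃ E : Submodule R P, Maximal (fun E : Submodule R P => Module.Injective R E) E := by
  refine zorn_le₀ {E : Submodule R P | Module.Injective R E} ?_
  intro c hc hchain
  by_cases hne : c.Nonempty
  · refine ⟨sSup c, ?_, fun z hz => le_sSup hz⟩
    apply Module.Baer.injective
    intro I g
    have hfg : (LinearMap.range ((sSup c).subtype ∘ₗ g)).FG := by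
      rw [LinearMap.range_eq_map]
      exact (IsNoetherian.noetherian (⊤ : Submodule R I)).map _
    have hle : LinearMap.range ((sSup c).subtype ∘ₗ g) ≤ sSup c := by
      rintro _ ⟨x, rfl⟩; exact (g x).2
    obtain ⟨E, hE, hEle⟩ := (CompleteLattice.isCompactElement_iff_le_of_directed_sSup_le _ _).1
      ((Submodule.fg_iff_compact _).1 hfg) c hne hchain.directedOn hle
    let g' : I →ₗ[R] E := LinearMap.codRestrict E ((sSup c).subtype ∘ₗ g) (fun x => hEle ⟨x, rfl⟩)
    obtain ⟨k, hk⟩ := Module.Baer.of_injective (hc hE) I g'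
    refine ⟨Submodule.inclusion (le_sSup hE) ∘ₗ k, fun x hx => ?_⟩
    apply Subtype.ext
    simp [hk x hx, g']
  · rw [Set.not_nonempty_iff_eq_empty] at hne
    subst hne
    exact ⟨⊥, ⟨fun _ _ _ _ _ _ _ _ _ => ⟨0, fun _ => Subsingleton.elim _ _⟩⟩, by simp⟩

/-- A non-injective projective has a non-injective principal indecomposable retract. -/
theorem exists_pim_retract_not_injective [IsArtinianRing R] (P : Type u) [AddCommGroup P]
    [Module R P] (hP : Module.Projective R P) (h0 : ¬ Module.Injective R P) :
    ∃ (N : Submodule R R) (i : N →ₗ[R] P) (r : P →ₗ[R] N), PIM N ∧ (∀ x, r (i x) = x) ∧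
      ¬ Module.Injective R N := by
  obtain ⟨E, hE, hmax⟩ := exists_maximal_injective (R := R) P
  obtain ⟨s, hs⟩ := hE.out E.subtype E.injective_subtype LinearMap.id
  have hcE : IsCompl E (LinearMap.ker s) := by
    have := isCompl_of_retract E.subtype s (LinearMap.ext hs)
    rwa [Submodule.range_subtype] at this
  obtain ⟨t, ht, htk⟩ := exists_retract_of_isCompl hcE.symm
  have hCp : Module.Projective R (LinearMap.ker s) :=
    projective_of_retract (LinearMap.ker s).subtype t ht hP
  have hC0 : Nontrivial (LinearMap.ker s) := by
    rw [Submodule.nontrivial_iff_ne_bot]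
    intro h
    have hE' := hcE.sup_eq_top
    rw [h, sup_bot_eq] at hE'
    exact h0 (injective_of_equiv (LinearEquiv.ofTop E hE').symm hE)
  obtain ⟨N, i, r, hN, hri⟩ := exists_pim_retract _ hCp hC0
  refine ⟨N, (LinearMap.ker s).subtype ∘ₗ i, r ∘ₗ t, hN, fun x => ?_, fun hinj => ?_⟩
  · simp [ht, hri]
  · have hii : Function.Injective ((LinearMap.ker s).subtype ∘ₗ i) :=
      Subtype.val_injective.comp (Function.LeftInverse.injective hri)
    let D := LinearMap.range ((LinearMap.ker s).subtype ∘ₗ i)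
    have hD : Module.Injective R D :=
      injective_of_equiv (LinearEquiv.ofInjective _ hii).symm hinj
    have hDle : D ≤ LinearMap.ker s := by
      rintro _ ⟨x, rfl⟩; exact (i x).2
    have hdis : Disjoint E D := hcE.disjoint.mono_right hDle
    have hsupinj : Module.Injective R (E ⊔ D : Submodule R P) :=
      injective_of_equiv (prodEquivSup hdis).symm (injective_prod hE hD)
    have hDE : D ≤ E := le_sup_right.trans (hmax hsupinj le_sup_left)
    have hDb : D = ⊥ := hdis.symm.eq_bot_of_le hDE
    have := hN.2.1
    obtain ⟨x, hx⟩ := exists_ne (0 : N)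
    have hxD : ((LinearMap.ker s).subtype ∘ₗ i) x ∈ D := ⟨x, rfl⟩
    rw [hDb, Submodule.mem_bot] at hxD
    exact hx (hii (by rw [hxD, map_zero]))

end DomDim

namespace DomDim
variable {R : Type u} [Ring R]

section hull
variable {M : Type u} [AddCommGroup M] [Module R M]

theorem exists_max_disjoint (D N : Submodule R M) (h : Disjoint D N) :
    ∃ E, D ≤ E ∧ Disjoint E N ∧ ∀ F, E ≤ F → Disjoint F N → F ≤ E := by
  obtain ⟨m, h1, h2⟩ := zorn_le_nonempty₀ {E : Submodule R M | Disjoint E N} (by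
    intro c hc hchain y hy
    refine ⟨sSup c, ?_, fun z hz => le_sSup hz⟩
    change Disjoint (sSup c) N
    rw [Submodule.disjoint_def]
    intro x hx hxN
    obtain ⟨E, hE, hxE⟩ := (Submodule.mem_sSup_of_directed ⟨y, hy⟩ hchain.directedOn).1 hx
    exact Submodule.disjoint_def.1 (hc hE) x hxE hxN) D h
  exact ⟨m, h1, h2.1, fun F hF hd => h2.2 hd hF⟩

/-- In an injective module, two disjoint submodules can be separated by a decomposition, in which
the first one is essential in the summand containing it. -/
theorem exists_hull_decomposition (hM : Module.Injective R M) (N D : Submodule R M)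
    (h : Disjoint D N) : ∃ E₁ E₂ : Submodule R M, IsCompl E₁ E₂ ∧ N ≤ E₁ ∧ D ≤ E₂ ∧
      ∀ X, X ≤ E₁ → Disjoint X N → X = ⊥ := by
  obtain ⟨E₂, hD, hE₂, hmax₂⟩ := exists_max_disjoint D N h
  obtain ⟨E₁, hN, hE₁, hmax₁⟩ := exists_max_disjoint N E₂ hE₂.symm
  have hdef := Submodule.disjoint_def.1 hE₁
  have hess : ∀ X, X ≤ E₁ → Disjoint X N → X = ⊥ := by
    intro X hX hXN
    have hd : Disjoint (E₂ ⊔ X) N := by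
      rw [Submodule.disjoint_def]
      intro n hn hnN
      obtain ⟨e, he, x, hx, rfl⟩ := Submodule.mem_sup.1 hn
      have he1 : e ∈ E₁ := by
        have := E₁.sub_mem (hN hnN) (hX hx)
        simpa using this
      have he0 := hdef e he1 he
      subst he0
      rw [zero_add] at hnN ⊢
      exact Submodule.disjoint_def.1 hXN x hx hnN
    have hle : X ≤ E₂ := le_sup_right.trans (hmax₂ _ le_sup_left hd)
    exact (hE₁.mono_left hX).eq_bot_of_le hle
  let f : (E₁ × E₂) →ₗ[R] M := (E₁ ⊔ E₂).subtype ∘ₗ (prodEquivSup hE₁).toLinearMap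
  have hf : Function.Injective f := Subtype.val_injective.comp (prodEquivSup hE₁).injective
  obtain ⟨ρ, hρ⟩ := hM.out f hf (E₁.subtype ∘ₗ LinearMap.fst R E₁ E₂)
  have hfv : ∀ a b, f (a, b) = (a : M) + b := fun a b => rfl
  have hρ1 : ∀ x ∈ E₁, ρ x = x := by
    intro x hx
    have := hρ (⟨x, hx⟩, 0)
    simpa [hfv] using this
  have hρ2 : ∀ x ∈ E₂, ρ x = 0 := by
    intro x hx
    have := hρ (0, ⟨x, hx⟩)
    simpa [hfv] using this
  have hdis : Disjoint (LinearMap.range ρ) E₂ := by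
    rw [Submodule.disjoint_def]
    rintro _ ⟨x, rfl⟩ hx
    have hU : E₂.comap ρ ≤ E₂ := by
      apply hmax₂
      · intro y hy
        rw [Submodule.mem_comap, hρ2 y hy]
        exact E₂.zero_mem
      · rw [Submodule.disjoint_def]
        intro n hn hnN
        rw [Submodule.mem_comap, hρ1 n (hN hnN)] at hn
        exact hdef n (hN hnN) hn
    exact hρ2 x (hU hx)
  have hran : LinearMap.range ρ ≤ E₁ :=
    hmax₁ _ (fun x hx => ⟨x, hρ1 x hx⟩) hdis
  refine ⟨E₁, E₂, ⟨hE₁, codisjoint_iff.2 (eq_top_iff.2 fun x _ => ?_)⟩, hN, hD, hess⟩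
  have hx1 : ρ x ∈ E₁ := hran ⟨x, rfl⟩
  have hk : LinearMap.ker ρ ≤ E₂ := by
    apply hmax₂
    · intro y hy; exact hρ2 y hy
    · rw [Submodule.disjoint_def]
      intro n hn hnN
      rw [LinearMap.mem_ker, hρ1 n (hN hnN)] at hn
      exact hn
  refine Submodule.mem_sup.2 ⟨ρ x, hx1, x - ρ x, hk ?_, by abel⟩
  rw [LinearMap.mem_ker, map_sub, hρ1 _ hx1, sub_self]

end hull

/-- `Z` is `N` if `N` is injective, and the cosyzygy of `N` otherwise. -/
def Rel (N Z : Type u) [AddCommGroup N] [Module R N] [AddCommGroup Z] [Module R Z] : Prop :=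
  (Module.Injective R N ∧ Nonempty (N ≃ₗ[R] Z)) ∨
  (¬ Module.Injective R N ∧ ∃ (E : ModuleCat.{u} R) (k : N →ₗ[R] E) (h : E →ₗ[R] Z),
    Module.Injective R E ∧ Function.Injective k ∧
    (∀ X : Submodule R E, Disjoint X (LinearMap.range k) → X = ⊥) ∧
    Function.Surjective h ∧ LinearMap.ker h = LinearMap.range k)

section rel
variable {N N' Z Z' : Type u} [AddCommGroup N] [Module R N] [AddCommGroup Z] [Module R Z]
  [AddCommGroup N'] [Module R N'] [AddCommGroup Z'] [Module R Z']

theorem Rel.functional (h : Rel (R := R) N Z) (h' : Rel (R := R) N' Z') (e : N ≃ₗ[R] N') :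
    Nonempty (Z ≃ₗ[R] Z') := by
  rcases h with ⟨hi, ⟨a⟩⟩ | ⟨hn, E, k, g, hE, hk, hess, hg, hker⟩
  · rcases h' with ⟨hi', ⟨a'⟩⟩ | ⟨hn', _⟩
    · exact ⟨a.symm.trans (e.trans a')⟩
    · exact absurd (injective_of_equiv e.symm hi) hn'
  · rcases h' with ⟨hi', _⟩ | ⟨hn', E', k', g', hE', hk', hess', hg', hker'⟩
    · exact absurd (injective_of_equiv e hi') hn
    · obtain ⟨φ, hφ⟩ := hE'.out k hk (k' ∘ₗ e.toLinearMap)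
      have hφi : Function.Injective φ := by
        rw [← LinearMap.ker_eq_bot]
        apply hess
        rw [Submodule.disjoint_def]
        rintro _ hx ⟨n, rfl⟩
        rw [LinearMap.mem_ker, hφ] at hx
        have : e n = 0 := hk' (by rw [map_zero]; exact hx)
        rw [e.map_eq_zero_iff.1 this, map_zero]
      have hrange : LinearMap.range k' ≤ LinearMap.range φ := by
        rintro _ ⟨n, rfl⟩
        exact ⟨k (e.symm n), by rw [hφ]; simp⟩
      obtain ⟨s, hs⟩ := hE.out φ hφi LinearMap.id
      have hc := isCompl_of_retract φ s (LinearMap.ext hs)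
      have hsb : LinearMap.ker s = ⊥ := hess' _ (hc.symm.disjoint.mono_right hrange)
      have htop : LinearMap.range φ = ⊤ := by
        have := hc.sup_eq_top
        rwa [hsb, sup_bot_eq] at this
      let Φ : E ≃ₗ[R] E' := LinearEquiv.ofBijective φ ⟨hφi, LinearMap.range_eq_top.1 htop⟩
      have hmap : (LinearMap.ker g).map (Φ : E →ₗ[R] E') = LinearMap.ker g' := by
        rw [hker, hker']
        ext y
        constructor
        · rintro ⟨_, ⟨n, rfl⟩, rfl⟩
          exact ⟨e n, (hφ n).symm⟩
        · rintro ⟨n, rfl⟩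
          refine ⟨k (e.symm n), ⟨_, rfl⟩, ?_⟩
          change φ _ = _
          rw [hφ]; simp
      exact ⟨(g.quotKerEquivOfSurjective hg).symm.trans
        ((Submodule.Quotient.equiv _ _ Φ hmap).trans (g'.quotKerEquivOfSurjective hg'))⟩

end rel

theorem projective_of_injective_ker {Q Z : Type u} [AddCommGroup Q] [Module R Q] [AddCommGroup Z]
    [Module R Z] (g : Q →ₗ[R] Z) (hg : Function.Surjective g) (hQ : Module.Projective R Q)
    (hk : Module.Injective R (LinearMap.ker g)) : Module.Projective R Z := by
  obtain ⟨s, hs⟩ := hk.out (LinearMap.ker g).subtype (Submodule.injective_subtype _) LinearMap.id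
  have hc := isCompl_of_retract (LinearMap.ker g).subtype s (LinearMap.ext hs)
  rw [Submodule.range_subtype] at hc
  obtain ⟨t, ht, -⟩ := exists_retract_of_isCompl hc.symm
  have hp : Module.Projective R (LinearMap.ker s) :=
    projective_of_retract (LinearMap.ker s).subtype t ht hQ
  exact Module.Projective.of_equiv ((Submodule.quotientEquivOfIsCompl _ _ hc).symm.trans
    (g.quotKerEquivOfSurjective hg))

theorem main_lemma [IsArtinianRing R] {Z Q₀ Q₁ : Type u} [AddCommGroup Z] [Module R Z]
    [AddCommGroup Q₀] [Module R Q₀] [AddCommGroup Q₁] [Module R Q₁] (hZ : Indec R Z)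
    (hp0 : Module.Projective R Q₀) (hi0 : Module.Injective R Q₀)
    (hp1 : Module.Projective R Q₁) (hi1 : Module.Injective R Q₁)
    (g : Q₀ →ₗ[R] Z) (hg : Function.Surjective g)
    (hker : Module.Projective R (LinearMap.ker g))
    (j : Z →ₗ[R] Q₁) (hj : Function.Injective j) :
    ∃ N : Submodule R R, PIM N ∧ Good R N ∧ Rel (R := R) N Z := by
  by_cases hZp : Module.Projective R Z
  · obtain ⟨N, i, r, hN, hri⟩ := exists_pim_retract (R := R) Z hZp hZ.1
    obtain ⟨e⟩ := hZ.equiv_of_retract hN.2.1 i r hri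
    obtain ⟨s, hs⟩ := Module.projective_lifting_property g LinearMap.id hg
    have hZi : Module.Injective R Z := injective_of_retract s g (LinearMap.congr_fun hs) hi0
    refine ⟨N, hN, Good.of_equiv e ?_, Or.inl ⟨injective_of_equiv e hZi, ⟨e⟩⟩⟩
    refine ⟨ModuleCat.of R Z, ModuleCat.of R PUnit.{u + 1}, hZp, hZi,
      inferInstanceAs (Module.Projective R PUnit.{u + 1}),
      ⟨fun _ _ _ _ _ _ _ _ _ => ⟨0, fun _ => rfl⟩⟩, LinearMap.id, 0,
      fun _ _ h => h, fun x => ⟨fun _ => ⟨x, rfl⟩, fun _ => rfl⟩⟩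
  · have hkni : ¬ Module.Injective R (LinearMap.ker g) := fun h =>
      hZp (projective_of_injective_ker g hg hp0 h)
    obtain ⟨N, i, r, hN, hri, hNi⟩ := exists_pim_retract_not_injective _ hker hkni
    have hc := isCompl_of_retract i r (LinearMap.ext hri)
    let ι : N →ₗ[R] Q₀ := (LinearMap.ker g).subtype ∘ₗ i
    have hι : Function.Injective ι :=
      Subtype.val_injective.comp (Function.LeftInverse.injective hri)
    let N' : Submodule R Q₀ := LinearMap.range ι
    let D : Submodule R Q₀ := (LinearMap.ker r).map (LinearMap.ker g).subtype
    have hN'eq : N' = (LinearMap.range i).map (LinearMap.ker g).subtype :=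
      LinearMap.range_comp _ _
    have hdis : Disjoint D N' := by
      rw [hN'eq]
      exact Submodule.disjoint_map (Submodule.injective_subtype _) hc.symm.disjoint
    have hsup : N' ⊔ D = LinearMap.ker g := by
      rw [hN'eq, ← Submodule.map_sup, hc.sup_eq_top, Submodule.map_subtype_top]
    obtain ⟨E₁, E₂, hE, hNE, hDE, hess⟩ := exists_hull_decomposition hi0 N' D hdis
    obtain ⟨t, ht, -⟩ := exists_retract_of_isCompl hE
    have hE1p : Module.Projective R E₁ := projective_of_retract E₁.subtype t ht hp0
    have hE1i : Module.Injective R E₁ := injective_of_retract E₁.subtype t ht hi0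
    have hEd := Submodule.disjoint_def.1 hE.disjoint
    -- elements of the first summand lying in the kernel
    have hkE : ∀ x ∈ E₁, g x = 0 → x ∈ N' := by
      intro x hx hgx
      have hx' : x ∈ N' ⊔ D := by rw [hsup]; exact hgx
      obtain ⟨n, hn, d, hd, rfl⟩ := Submodule.mem_sup.1 hx'
      have hd1 : d ∈ E₁ := by
        have := E₁.sub_mem hx (hNE hn)
        simpa using this
      rw [hEd d hd1 (hDE hd), add_zero]
      exact hn
    have hN'k : N' ≤ LinearMap.ker g := by rw [← hsup]; exact le_sup_left
    have hDk : D ≤ LinearMap.ker g := by rw [← hsup]; exact le_sup_right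
    have hcZ : IsCompl (E₁.map g) (E₂.map g) := by
      constructor
      · rw [Submodule.disjoint_def]
        rintro _ ⟨x₁, hx₁, rfl⟩ ⟨x₂, hx₂, h12⟩
        have hx' : x₁ - x₂ ∈ N' ⊔ D := by
          rw [hsup, LinearMap.mem_ker, map_sub, h12, sub_self]
        obtain ⟨n, hn, d, hd, hnd⟩ := Submodule.mem_sup.1 hx'
        have heq : x₁ - n = x₂ + d := by
          have h3 : x₁ = n + d + x₂ := by rw [hnd]; abel
          rw [h3]; abel
        have h0 : x₁ - n = 0 := hEd _ (E₁.sub_mem hx₁ (hNE hn))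
          (heq ▸ E₂.add_mem hx₂ (hDE hd))
        rw [sub_eq_zero.1 h0]
        exact hN'k hn
      · rw [codisjoint_iff, ← Submodule.map_sup, hE.sup_eq_top, Submodule.map_top,
          LinearMap.range_eq_top.2 hg]
    have hE1ne : E₁.map g ≠ ⊥ := by
      intro h0
      have hle : E₁ ≤ N' := by
        intro x hx
        refine hkE x hx ?_
        have : g x ∈ E₁.map g := ⟨x, hx, rfl⟩
        rwa [h0, Submodule.mem_bot] at this
      have heq : E₁ = N' := le_antisymm hle hNE
      apply hNi
      rw [heq] at hE1i
      exact injective_of_equiv (LinearEquiv.ofInjective ι hι) hE1i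
    have hE2 : E₂.map g = ⊥ := (hZ.2 _ _ hcZ).resolve_left hE1ne
    have hE1top : E₁.map g = ⊤ := by
      have := hcZ.sup_eq_top
      rwa [hE2, sup_bot_eq] at this
    let k : N →ₗ[R] E₁ := LinearMap.codRestrict E₁ ι (fun x => hNE ⟨x, rfl⟩)
    let h : E₁ →ₗ[R] Z := g ∘ₗ E₁.subtype
    have hkinj : Function.Injective k := fun a b hab => hι (congrArg E₁.subtype hab)
    have hhs : Function.Surjective h := by
      intro z
      have : z ∈ E₁.map g := by rw [hE1top]; trivial
      obtain ⟨x, hx, rfl⟩ := this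
      exact ⟨⟨x, hx⟩, rfl⟩
    have hkh : LinearMap.ker h = LinearMap.range k := by
      ext ⟨x, hx⟩
      constructor
      · intro hx0
        obtain ⟨n, hn⟩ := hkE x hx hx0
        exact ⟨n, Subtype.ext hn⟩
      · rintro ⟨n, hn⟩
        have : ι n = x := congrArg Subtype.val hn
        exact hN'k ⟨n, this⟩
    refine ⟨N, hN, ?_, Or.inr ⟨hNi, ModuleCat.of R E₁, k, h, hE1i, hkinj, ?_, hhs, hkh⟩⟩
    · refine ⟨ModuleCat.of R E₁, ModuleCat.of R Q₁, hE1p, hE1i, hp1, hi1, k, j ∘ₗ h, hkinj, ?_⟩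
      intro x
      have h1 : x ∈ LinearMap.ker h ↔ x ∈ LinearMap.range k := by rw [hkh]
      rw [LinearMap.mem_ker, LinearMap.mem_range] at h1
      refine Iff.trans ?_ h1
      change j (h x) = 0 ↔ _
      exact map_eq_zero_iff j hj
    · intro X hX
      have hX' : X.map E₁.subtype = ⊥ := by
        apply hess
        · exact Submodule.map_subtype_le _ _
        · rw [Submodule.disjoint_def]
          rintro _ ⟨x, hx, rfl⟩ ⟨n, hn⟩
          have : x = 0 := Submodule.disjoint_def.1 hX x hx ⟨n, Subtype.ext hn⟩
          rw [this, map_zero]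
      exact Submodule.map_injective_of_injective E₁.injective_subtype
        (by rw [hX', Submodule.map_bot])

end DomDim

namespace DomDim

theorem indec_of_isIndecomposableMod {R : Type u} [Ring R] (Z : ModuleCat.{u} R)
    (h : IsIndecomposableMod Z) : Indec R Z := by
  refine ⟨?_, fun p q hpq => ?_⟩
  · by_contra hn
    rw [not_nontrivial_iff_subsingleton] at hn
    exact h.1 (ModuleCat.isZero_of_subsingleton Z)
  · have e : Z ≅ ModuleCat.of R p ⊞ ModuleCat.of R q :=
      (Submodule.prodEquivOfIsCompl p q hpq).symm.toModuleIso ≪≫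
        (ModuleCat.biprodIsoProd (ModuleCat.of R p) (ModuleCat.of R q)).symm
    rcases h.2 _ _ ⟨e⟩ with h0 | h0
    · left
      have : Subsingleton p := ModuleCat.subsingleton_of_isZero h0
      exact Submodule.subsingleton_iff_eq_bot.1 this
    · right
      have : Subsingleton q := ModuleCat.subsingleton_of_isZero h0
      exact Submodule.subsingleton_iff_eq_bot.1 this

theorem injective_pi {R : Type u} [Ring R] (n : ℕ) (Q : Type u) [AddCommGroup Q] [Module R Q]
    (hQ : Module.Injective R Q) : Module.Injective R (Fin n → Q) where
  out X Y _ _ _ _ f hf g := by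
    choose k hk using fun i => hQ.out f hf (LinearMap.proj i ∘ₗ g)
    exact ⟨LinearMap.pi k, fun x => by ext i; simp [hk]⟩

theorem projective_pi {R : Type u} [Ring R] (n : ℕ) (Q : Type u) [AddCommGroup Q] [Module R Q]
    (hQ : Module.Projective R Q) : Module.Projective R (Fin n → Q) :=
  Module.Projective.of_equiv (DirectSum.linearEquivFunOnFintype R (Fin n) (fun _ => Q))

theorem shortExact_mk {R : Type u} [Ring R] {A B C : ModuleCat.{u} R} (f : A ⟶ B) (g : B ⟶ C)
    (hf : Function.Injective f) (hg : Function.Surjective g) (h : Function.Exact f g) :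
    ∃ w : f ≫ g = 0, (ShortComplex.mk f g w).ShortExact := by
  have w : f ≫ g = 0 := by
    ext x
    exact h.apply_apply_eq_zero x
  refine ⟨w, ?_⟩
  exact { exact := (ShortComplex.ShortExact.moduleCat_exact_iff_function_exact _).2 h
          mono_f := (ModuleCat.mono_iff_injective f).2 hf
          epi_g := (ModuleCat.epi_iff_surjective g).2 hg }

theorem summand_rel {R : Type u} [Ring R] [IsArtinianRing R] (Y Q : ModuleCat.{u} R)
    (hQproj : Projective Q) (hQinj : Injective Q)
    (hgen : ∃ (n : ℕ) (g : ModuleCat.of R (Fin n → Q) ⟶ Y), Function.Surjective g)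
    (hcogen : ∃ (n : ℕ) (f : Y ⟶ ModuleCat.of R (Fin n → Q)), Function.Injective f)
    (hpd : ∃ (P₀ P₁ : ModuleCat.{u} R), Projective P₀ ∧ Projective P₁ ∧
      ∃ (f₁ : P₁ ⟶ P₀) (g : P₀ ⟶ Y),
        Function.Injective f₁ ∧ Function.Surjective g ∧ Function.Exact f₁ g)
    (Z : ModuleCat.{u} R) (hZ : IsIndecomposableMod Z) (hZY : IsSummand Z Y) :
    ∃ N : Submodule R R, PIM N ∧ Good R N ∧ Rel (R := R) N Z := by
  have hQp : Module.Projective R Q := (IsProjective.iff_projective (R := R) Q).2 hQproj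
  have hQi : Module.Injective R Q := (Module.injective_iff_injective_object R Q).2 hQinj
  obtain ⟨a, g, hg⟩ := hgen
  obtain ⟨b, f, hf⟩ := hcogen
  obtain ⟨ι, ρ, hιρ⟩ := hZY
  have hid : ∀ z : Z, ρ (ι z) = z := fun z => by
    rw [← ModuleCat.comp_apply, hιρ, ModuleCat.id_apply]
  -- projective dimension
  obtain ⟨P₀, P₁, hP₀, hP₁, f₁, g₁, hf₁, hg₁, hex⟩ := hpd
  obtain ⟨w, hS⟩ := shortExact_mk f₁ g₁ hf₁ hg₁ hex
  have hY : HasProjectiveDimensionLT Y 2 :=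
    (hS.hasProjectiveDimensionLT_X₃_iff 0 hP₀).2
      (projective_iff_hasProjectiveDimensionLT_one.1 hP₁)
  have hZd : HasProjectiveDimensionLT Z 2 :=
    Retract.hasProjectiveDimensionLT ⟨ι, ρ, hιρ⟩ 2
  let G : (Fin a → Q) →ₗ[R] Z := (g ≫ ρ).hom
  have hG : Function.Surjective G := by
    intro z
    obtain ⟨x, hx⟩ := hg (ι z)
    refine ⟨x, ?_⟩
    change ρ (g x) = z
    rw [hx, hid]
  have hp0 := projective_pi a Q hQp
  have hi0 := injective_pi a Q hQi
  obtain ⟨w', hS'⟩ := shortExact_mk (ModuleCat.ofHom (LinearMap.ker G).subtype)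
    (ModuleCat.ofHom G) (Submodule.injective_subtype _) hG (LinearMap.exact_subtype_ker_map G)
  have hker : Projective (ModuleCat.of R (LinearMap.ker G)) :=
    projective_iff_hasProjectiveDimensionLT_one.2
      ((hS'.hasProjectiveDimensionLT_X₃_iff 0
        ((IsProjective.iff_projective (R := R) (Fin a → Q)).1 hp0)).1 hZd)
  have hker' : Module.Projective R (LinearMap.ker G) :=
    (IsProjective.iff_projective (R := R) _).2 hker
  refine main_lemma (indec_of_isIndecomposableMod Z hZ) hp0 hi0 (projective_pi b Q hQp)
    (injective_pi b Q hQi) G hG hker' (ι ≫ f).hom ?_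
  intro x y hxy
  have : ι x = ι y := hf hxy
  rw [← hid x, this, hid]

theorem good_ring {R : Type u} [Ring R] [IsArtinianRing R] (P : ModuleCat.{u} R → Prop)
    (hP : ∀ Z, P Z → ∃ N : Submodule R R, PIM N ∧ Good R N ∧ Rel (R := R) N Z)
    (hcount : Cardinal.mk (ModIsoClasses P)
      = Cardinal.mk (ModIsoClasses (fun S : ModuleCat.{u} R => Simple S))) : Good R R := by
  have hfin : Finite (ModIsoClasses (fun S : ModuleCat.{u} R => Simple S)) := by
    obtain ⟨T, hT, F, h1, h2⟩ := exists_finite_simple_invariant R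
    have hs : ∀ S : {S : ModuleCat.{u} R // Simple S}, IsSimpleModule R S.1 := fun S =>
      (simple_iff_isSimpleModule' S.1).1 S.2
    choose t ht using fun S : {S : ModuleCat.{u} R // Simple S} => h1 S.1 (hs S)
    refine Finite.of_injective (fun c : ModIsoClasses (fun S : ModuleCat.{u} R => Simple S) =>
      t (Quotient.out c)) ?_
    intro c d hcd
    obtain ⟨e⟩ := h2 _ _ _ (hs _) (hs _) (ht (Quotient.out c))
      ((show t (Quotient.out c) = t (Quotient.out d) from hcd) ▸ ht (Quotient.out d))
    exact Quotient.out_equiv_out.1 ⟨e.toModuleIso⟩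
  choose N hN hGood hRel using fun Z : {Z : ModuleCat.{u} R // P Z} => hP Z.1 Z.2
  choose S p hS hp using fun Z : {Z : ModuleCat.{u} R // P Z} =>
    exists_simple_quotient (R := R) (N Z) (hN Z).2.1
  obtain ⟨equiv⟩ := Cardinal.eq.1 hcount
  let F : ModIsoClasses P → ModIsoClasses (fun S : ModuleCat.{u} R => Simple S) := fun c =>
    Quotient.mk _ ⟨S (Quotient.out c), (simple_iff_isSimpleModule' _).2 (hS _)⟩
  have hFinj : Function.Injective F := by
    intro c d hcd
    obtain ⟨e⟩ := Quotient.exact hcd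
    have e' : S (Quotient.out c) ≃ₗ[R] S (Quotient.out d) := e.toLinearEquiv
    have := hS (Quotient.out d)
    obtain ⟨n⟩ := (hN (Quotient.out c)).equiv_of_common_quotient (hN (Quotient.out d))
      (e'.toLinearMap ∘ₗ p (Quotient.out c)) (p (Quotient.out d))
      (e'.surjective.comp (hp _)) (hp _)
    obtain ⟨z⟩ := (hRel (Quotient.out c)).functional (hRel (Quotient.out d)) n
    exact Quotient.out_equiv_out.1 ⟨z.toModuleIso⟩
  have hFin' : Finite (ModIsoClasses P) := Finite.of_equiv _ equiv.symm
  have hFsurj : Function.Surjective F :=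
    (Finite.injective_iff_surjective_of_equiv equiv).1 hFinj
  refine good_of_pim fun M hM => ?_
  obtain ⟨T, q, hT, hq⟩ := exists_simple_quotient (R := R) M hM.2.1
  obtain ⟨c, hc⟩ := hFsurj (Quotient.mk _ ⟨T, (simple_iff_isSimpleModule' _).2 hT⟩)
  obtain ⟨e⟩ := Quotient.exact hc
  have e' : S (Quotient.out c) ≃ₗ[R] T := e.toLinearEquiv
  obtain ⟨n⟩ := hM.equiv_of_common_quotient (hN (Quotient.out c)) q
    (e'.toLinearMap ∘ₗ p (Quotient.out c)) hq (e'.surjective.comp (hp _))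
  exact (hGood _).of_equiv n

end DomDim

/-- Let `Γ` be a finite-dimensional algebra of global dimension `≤ 2`
admitting a tilting module `Y` (projective dimension `≤ 1`, no self-extensions, as many
indecomposable summands up to isomorphism as there are simple modules) which is generated
and cogenerated by a projective-injective module `Q`.  Then `Γ` has dominant dimension
`≥ 2`: there is an exact sequence `0 → Γ → Q' → Q''` with `Q'`, `Q''`
projective-injective. -/
theorem dominant_dimension_ge_two_of_tilting [FiniteDimensional K Γ]
    -- global dimension ≤ 2
    (hgl : ∀ M : ModuleCat.{u} Γ, ∃ (P₀ P₁ P₂ : ModuleCat.{u} Γ),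
      Projective P₀ ∧ Projective P₁ ∧ Projective P₂ ∧
      ∃ (f₂ : P₂ ⟶ P₁) (f₁ : P₁ ⟶ P₀) (g : P₀ ⟶ M),
        Function.Injective f₂ ∧ Function.Surjective g ∧
        Function.Exact f₂ f₁ ∧ Function.Exact f₁ g)
    (Y Q : ModuleCat.{u} Γ)
    -- Q is projective-injective
    (hQproj : Projective Q) (hQinj : Injective Q)
    -- Y is generated and cogenerated by Q
    (hgen : ∃ (n : ℕ) (g : ModuleCat.of Γ (Fin n → Q) ⟶ Y), Function.Surjective g)
    (hcogen : ∃ (n : ℕ) (f : Y ⟶ ModuleCat.of Γ (Fin n → Q)), Function.Injective f)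
    -- Y has projective dimension ≤ 1
    (hpd : ∃ (P₀ P₁ : ModuleCat.{u} Γ), Projective P₀ ∧ Projective P₁ ∧
      ∃ (f₁ : P₁ ⟶ P₀) (g : P₀ ⟶ Y),
        Function.Injective f₁ ∧ Function.Surjective g ∧ Function.Exact f₁ g)
    -- Ext¹(Y, Y) = 0: every self-extension of Y splits
    (hext : ∀ (E : ModuleCat.{u} Γ) (f : Y ⟶ E) (g : E ⟶ Y),
      Function.Injective f → Function.Surjective g → Function.Exact f g →
      ∃ s : E ⟶ Y, f ≫ s = 𝟙 Y)
    -- the number of iso classes of indecomposable summands of Y equals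
    -- the number of iso classes of simple Γ-modules
    (hcount : Cardinal.mk (ModIsoClasses (fun Z => IsIndecomposableMod Z ∧ IsSummand Z Y))
      = Cardinal.mk (ModIsoClasses (fun S : ModuleCat.{u} Γ => Simple S))) :
    -- dominant dimension ≥ 2
    ∃ (Q' Q'' : ModuleCat.{u} Γ),
      Projective Q' ∧ Injective Q' ∧ Projective Q'' ∧ Injective Q'' ∧
      ∃ (ι : ModuleCat.of Γ Γ ⟶ Q') (θ : Q' ⟶ Q''),
        Function.Injective ι ∧ Function.Exact ι θ := by
  have hart : IsArtinianRing Γ := isArtinian_of_tower K inferInstance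
  obtain ⟨Q', Q'', h1, h2, h3, h4, ι, θ, hi, he⟩ := DomDim.good_ring
    (fun Z => IsIndecomposableMod Z ∧ IsSummand Z Y)
    (fun Z hZ => DomDim.summand_rel Y Q hQproj hQinj hgen hcogen hpd Z hZ.1 hZ.2) hcount
  exact ⟨Q', Q'', (IsProjective.iff_projective (R := Γ) Q').1 h1,
    (Module.injective_iff_injective_object Γ Q').1 h2,
    (IsProjective.iff_projective (R := Γ) Q'').1 h3,
    (Module.injective_iff_injective_object Γ Q'').1 h4,
    ModuleCat.ofHom ι, ModuleCat.ofHom θ, hi, he⟩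
end

section
/- Let B be a finitely generated algebra over an algebraically closed field K, with a complete set of orthogonal idempotents e₁,…,eₙ, and let X be a K-point of the representation scheme of d-dimensional representations of B (with prescribed dimensions at each idempotent). If Ext²_B(X, X) = 0, then X is a smooth point of the representation scheme. -/
universe u

/-- The underlying type of a twisted extension of `Z` by `X`. -/
def TwE (X Z : Type u) : Type u := X × Z

instance (X Z : Type u) [AddCommGroup X] [AddCommGroup Z] : AddCommGroup (TwE X Z) :=
  inferInstanceAs (AddCommGroup (X × Z))

/-- The twisted module structure on `X × Z`. -/
@[reducible] def TwE.module {B X Z : Type u} [Ring B] [AddCommGroup X] [AddCommGroup Z]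
    [Module B X] [Module B Z] (γ : B → Z → X)
    (hz : ∀ a z w, γ a (z + w) = γ a z + γ a w)
    (ha : ∀ a b z, γ (a + b) z = γ a z + γ b z)
    (h1 : ∀ z, γ 1 z = 0)
    (hm : ∀ a b z, γ (a * b) z = a • γ b z + γ a (b • z)) : Module B (TwE X Z) where
  smul a p := (a • p.1 + γ a p.2, a • p.2)
  one_smul p := by
    refine Prod.ext ?_ ?_
    · change (1 : B) • p.1 + γ 1 p.2 = p.1
      simp [h1]
    · exact one_smul B p.2
  mul_smul a b p := by
    refine Prod.ext ?_ ?_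
    · change (a * b) • p.1 + γ (a * b) p.2 = a • (b • p.1 + γ b p.2) + γ a (b • p.2)
      rw [hm, smul_add, mul_smul, add_assoc]
    · exact mul_smul a b p.2
  smul_zero a := by
    have h0 : γ a 0 = 0 := by simpa using hz a 0 0
    refine Prod.ext ?_ ?_
    · change a • (0 : X) + γ a 0 = 0
      simp [h0]
    · exact smul_zero a
  smul_add a p q := by
    refine Prod.ext ?_ ?_
    · change a • (p.1 + q.1) + γ a (p.2 + q.2) = (a • p.1 + γ a p.2) + (a • q.1 + γ a q.2)
      rw [hz, smul_add]; abel
    · exact smul_add a p.2 q.2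
  add_smul a b p := by
    refine Prod.ext ?_ ?_
    · change (a + b) • p.1 + γ (a + b) p.2 = (a • p.1 + γ a p.2) + (b • p.1 + γ b p.2)
      rw [ha, add_smul]; abel
    · exact add_smul a b p.2
  zero_smul p := by
    have h0 : γ 0 p.2 = 0 := by simpa using ha 0 0 p.2
    refine Prod.ext ?_ ?_
    · change (0 : B) • p.1 + γ 0 p.2 = 0
      simp [h0]
    · exact zero_smul B p.2

/-- Splitting of the twisted extension, spelled out. -/
lemma twisted_split {B X Z : Type u} [Ring B] [AddCommGroup X] [AddCommGroup Z]
    [Module B X] [Module B Z] (γ : B → Z → X)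
    (hz : ∀ a z w, γ a (z + w) = γ a z + γ a w)
    (ha : ∀ a b z, γ (a + b) z = γ a z + γ b z)
    (h1 : ∀ z, γ 1 z = 0)
    (hm : ∀ a b z, γ (a * b) z = a • γ b z + γ a (b • z))
    (H : ∀ (E : Type u) (_ : AddCommGroup E) (_ : Module B E)
        (f : X →ₗ[B] E) (g : E →ₗ[B] Z), Function.Injective f →
        Function.Surjective g → Function.Exact f g →
        ∃ s : E →ₗ[B] X, s.comp f = LinearMap.id) :
    ∃ k : Z →+ X, ∀ a z, k (a • z) + γ a z = a • k z := by
  let _ : Module B (TwE X Z) := TwE.module γ hz ha h1 hm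
  have h0 : ∀ a, γ a 0 = 0 := fun a => by simpa using hz a 0 0
  let f : X →ₗ[B] TwE X Z :=
    { toFun := fun x => ((x, 0) : X × Z)
      map_add' := fun x y => Prod.ext rfl (add_zero (0 : Z)).symm
      map_smul' := fun a x => by
        refine Prod.ext ?_ ?_
        · change a • x = a • x + γ a 0
          rw [h0, add_zero]
        · exact (smul_zero a).symm }
  let g : TwE X Z →ₗ[B] Z :=
    { toFun := fun p => p.2
      map_add' := fun p q => rfl
      map_smul' := fun a p => rfl }
  obtain ⟨s, hs⟩ := H (TwE X Z) inferInstance inferInstance f g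
    (fun x y h => congrArg Prod.fst h) (fun z => ⟨((0, z) : X × Z), rfl⟩)
    (fun p => ⟨fun h => ⟨p.1, Prod.ext rfl h.symm⟩, by rintro ⟨x, rfl⟩; rfl⟩)
  have hs' : ∀ x, s (f x) = x := fun x => LinearMap.congr_fun hs x
  let j : Z →+ TwE X Z :=
    { toFun := fun z => ((0, z) : X × Z)
      map_zero' := rfl
      map_add' := fun z w => Prod.ext (add_zero (0 : X)).symm rfl }
  refine ⟨s.toAddMonoidHom.comp j, fun a z => ?_⟩
  change s (j (a • z)) + γ a z = a • s (j z)
  rw [← map_smul]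
  conv_lhs => rw [← hs' (γ a z)]
  rw [← map_add]
  congr 1
  refine Prod.ext ?_ ?_
  · change 0 + γ a z = a • (0 : X) + γ a z
    simp
  · exact add_zero (a • z)

/-- Vanishing of the relevant Hochschild classes. -/
lemma coboundary {K : Type u} [Field K] {B : Type u} [Ring B] [Algebra K B] (d : ℕ)
    (θ : B →ₐ[K] Matrix (Fin d) (Fin d) K)
    (X : Type u) [AddCommGroup X] [Module B X]
    (ξ : X ≃+ (Fin d → K))
    (hX : ∀ (b : B) (x : X), ξ (b • x) = (θ b).mulVec (ξ x))
    (hext2 : ∀ (Z P : Type u) (_ : AddCommGroup Z) (_ : Module B Z)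
      (_ : AddCommGroup P) (_ : Module B P), Module.Projective B P →
      ∀ (ι : Z →ₗ[B] P) (π : P →ₗ[B] X), Function.Injective ι →
        Function.Surjective π → Function.Exact ι π →
      ∀ (E : Type u) (_ : AddCommGroup E) (_ : Module B E)
        (f : X →ₗ[B] E) (g : E →ₗ[B] Z), Function.Injective f →
        Function.Surjective g → Function.Exact f g →
        ∃ s : E →ₗ[B] X, s.comp f = LinearMap.id)
    (c : B → B → Matrix (Fin d) (Fin d) K)
    (cl : ∀ a b b', c (a + b) b' = c a b' + c b b')
    (cr : ∀ a b b', c a (b + b') = c a b + c a b')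
    (crs : ∀ a (r : K) b, c a (r • b) = r • c a b)
    (csc : ∀ (r : K) b, c (algebraMap K B r) b = 0)
    (c1r : ∀ a, c a 1 = 0)
    (hc : ∀ a b b', θ a * c b b' - c (a * b) b' + c a (b * b') - c a b * θ b' = 0) :
    ∃ h : B →ₗ[K] Matrix (Fin d) (Fin d) K,
      ∀ a b, h (a * b) = c a b + θ a * h b + h a * θ b := by
  classical
  have hξs : ∀ (b : B) (v : Fin d → K), b • ξ.symm v = ξ.symm ((θ b).mulVec v) := by
    intro b v
    apply ξ.injective
    simp [hX]
  have hθK : ∀ (r : K) (v : Fin d → K), (θ (algebraMap K B r)).mulVec v = r • v := by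
    intro r v
    rw [AlgHom.commutes, Algebra.algebraMap_eq_smul_one, Matrix.smul_mulVec, Matrix.one_mulVec]
  have hξK : ∀ (r : K) (x : X), ξ (algebraMap K B r • x) = r • ξ x := by
    intro r x
    rw [hX, hθK]
  let xb : Fin d → X := fun i => ξ.symm (Pi.single i 1)
  let π : (Fin d → B) →ₗ[B] X := Fintype.linearCombination B xb
  have hπ : ∀ z, π z = ∑ i, z i • xb i := fun z => rfl
  have hξπ : ∀ z, ξ (π z) = ∑ i, (θ (z i)).mulVec (Pi.single i 1) := by
    intro z
    simp [hπ, map_sum, hX, xb]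
  have hπs : Function.Surjective π := by
    intro x
    refine ⟨fun i => algebraMap K B (ξ x i), ?_⟩
    apply ξ.injective
    rw [hξπ]
    simp only [hθK]
    ext j
    simp [Finset.sum_apply, Pi.single_apply]
  let Z := LinearMap.ker π
  let γ : B → Z → X := fun a z => ξ.symm (∑ i, (c a (z.1 i)).mulVec (Pi.single i 1))
  obtain ⟨k, hk⟩ := twisted_split (B := B) (X := X) (Z := Z) γ
    (by
      intro a z w
      simp only [γ, ← map_add, ← Finset.sum_add_distrib, ← Matrix.add_mulVec, ← cr]
      rfl)
    (by
      intro a b z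
      simp only [γ, ← map_add, ← Finset.sum_add_distrib, ← Matrix.add_mulVec, ← cl])
    (by
      intro z
      have : ∀ b, c 1 b = 0 := fun b => by simpa using csc 1 b
      simp only [γ, this, Matrix.zero_mulVec, Finset.sum_const_zero, map_zero])
    (by
      intro a b z
      have hz : ∑ i, (θ (z.1 i)).mulVec (Pi.single i 1) = (0 : Fin d → K) := by
        rw [← hξπ, z.2, map_zero]
      simp only [γ, hξs, ← map_add, Matrix.mulVec_sum, ← Finset.sum_add_distrib,
        Matrix.mulVec_mulVec, ← Matrix.add_mulVec]
      congr 1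
      rw [← sub_eq_zero, ← neg_eq_zero, ← Matrix.mulVec_zero (c a b), ← hz, Matrix.mulVec_sum,
        ← Finset.sum_sub_distrib, ← Finset.sum_neg_distrib]
      refine Finset.sum_congr rfl fun i _ => ?_
      rw [Matrix.mulVec_mulVec, ← Matrix.sub_mulVec, ← Matrix.neg_mulVec]
      congr 1
      have := hc a b (z.1 i)
      rw [sub_eq_zero] at this
      rw [← this]
      change -(c (a * b) (z.1 i) - (θ a * c b (z.1 i) + c a (b * z.1 i))) = _
      abel)
    (hext2 Z (Fin d → B) inferInstance inferInstance inferInstance inferInstance inferInstance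
      Z.subtype π Subtype.val_injective hπs (LinearMap.exact_subtype_ker_map π))
  -- the element `b e_j - ∑ θ(b)_{ij} e_i` of `Z`
  let w : B → Fin d → (Fin d → B) := fun b j =>
    Pi.single j b - fun i => algebraMap K B (θ b i j)
  have hw : ∀ b j, w b j ∈ Z := by
    intro b j
    rw [LinearMap.mem_ker]
    apply ξ.injective
    rw [map_sub, map_sub, hξπ, hξπ, map_zero, sub_eq_zero]
    simp only [hθK]
    rw [Finset.sum_eq_single j]
    · ext l
      simp [Finset.sum_apply, Pi.single_apply]
    · intro i _ hi
      rw [Pi.single_eq_of_ne hi, map_zero, Matrix.zero_mulVec]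
    · simp
  let wz : B → Fin d → Z := fun b j => ⟨w b j, hw b j⟩
  have hγK : ∀ (r : K) z, γ (algebraMap K B r) z = 0 := by
    intro r z
    simp only [γ, csc, Matrix.zero_mulVec, Finset.sum_const_zero, map_zero]
  have hkK : ∀ (r : K) z, ξ (k (algebraMap K B r • z)) = r • ξ (k z) := by
    intro r z
    have := hk (algebraMap K B r) z
    rw [hγK, add_zero] at this
    rw [this, hξK]
  let h : B →ₗ[K] Matrix (Fin d) (Fin d) K :=
    { toFun := fun b => Matrix.of fun i j => ξ (k (wz b j)) i
      map_add' := by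
        intro a b
        ext i j
        simp only [Matrix.of_apply, Matrix.add_apply]
        rw [← Pi.add_apply, ← map_add, ← map_add]
        refine congrArg (fun z => ξ (k z) i) (Subtype.ext ?_)
        change w (a + b) j = w a j + w b j
        funext l
        simp only [w, Pi.sub_apply, Pi.add_apply, Pi.single_add, map_add, Matrix.add_apply]
        abel
      map_smul' := by
        intro r b
        ext i j
        simp only [Matrix.of_apply, Matrix.smul_apply, RingHom.id_apply]
        rw [← Pi.smul_apply, ← hkK]
        refine congrArg (fun z => ξ (k z) i) (Subtype.ext ?_)
        change w (r • b) j = algebraMap K B r • w b j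
        funext l
        simp only [w, Pi.sub_apply, Pi.smul_apply, map_smul, Matrix.smul_apply, smul_sub,
          smul_eq_mul, map_mul, Pi.single_apply]
        split_ifs <;> simp [Algebra.smul_def, mul_sub] }
  have hh : ∀ b i j, h b i j = ξ (k (wz b j)) i := fun b i j => rfl
  have key : ∀ a b, h (a * b) = θ a * h b - c a b + h a * θ b := by
    intro a b
    ext i j
    have e1 : wz (a * b) j = a • wz b j + ∑ l, algebraMap K B (θ b l j) • wz a l := by
      apply Subtype.ext
      rw [Submodule.coe_add, Submodule.coe_smul, AddSubmonoidClass.coe_finsetSum]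
      change w (a * b) j = a • w b j + ∑ l, algebraMap K B (θ b l j) • w a l
      funext m
      simp only [w, Pi.add_apply, Finset.sum_apply, Pi.smul_apply, Pi.sub_apply, smul_eq_mul,
        mul_sub, Finset.sum_sub_distrib, map_mul, Matrix.mul_apply, map_sum]
      have e2 : ∑ l, algebraMap K B (θ b l j) * (Pi.single l a : Fin d → B) m
          = a * algebraMap K B (θ b m j) := by
        rw [Finset.sum_eq_single m]
        · simp [Algebra.commutes]
        · intro l _ hl
          simp [Pi.single_apply, hl.symm]
        · simp
      have e3 : (Pi.single j (a * b) : Fin d → B) m = a * (Pi.single j b : Fin d → B) m := by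
        simp only [Pi.single_apply]
        split_ifs <;> simp
      rw [e2, e3]
      have e4 : ∑ l, algebraMap K B (θ a m l) * algebraMap K B (θ b l j)
          = ∑ l, algebraMap K B (θ b l j) * algebraMap K B (θ a m l) :=
        Finset.sum_congr rfl fun l _ => Algebra.commutes _ _
      rw [e4]
      abel
    have e5 : ξ (γ a (wz b j)) = fun i => c a b i j := by
      change ξ (ξ.symm (∑ i, (c a (w b j i)).mulVec (Pi.single i 1))) = _
      rw [AddEquiv.apply_symm_apply, Finset.sum_eq_single j]
      · have e0 : ∀ r : K, c a (algebraMap K B r) = 0 := fun r => by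
          rw [Algebra.algebraMap_eq_smul_one, crs, c1r, smul_zero]
        have e6 : c a (w b j j) = c a b := by
          have := cr a (w b j j) (algebraMap K B (θ b j j))
          rw [e0, add_zero] at this
          rw [← this]
          simp [w]
        rw [e6]
        ext i
        simp [Matrix.mulVec_single]
      · intro i _ hi
        have : w b j i = algebraMap K B (-(θ b i j)) := by
          simp [w, Pi.single_apply, hi]
        rw [this, Algebra.algebraMap_eq_smul_one, crs, c1r]
        rw [smul_zero, Matrix.zero_mulVec]
      · simp
    have e7 : k (a • wz b j) = a • k (wz b j) - γ a (wz b j) := by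
      rw [← hk]; simp
    rw [hh, e1, map_add, map_sum, map_add, map_sum, e7, map_sub, hX, e5]
    simp only [hkK, Pi.add_apply, Pi.sub_apply, Finset.sum_apply, Pi.smul_apply, smul_eq_mul,
      Matrix.add_apply, Matrix.sub_apply, Matrix.mul_apply, Matrix.mulVec, dotProduct, hh]
    congr 1
    exact Finset.sum_congr rfl fun l _ => mul_comm _ _
  refine ⟨-h, fun a b => ?_⟩
  rw [LinearMap.neg_apply, LinearMap.neg_apply, LinearMap.neg_apply, key, mul_neg, neg_mul]
  abel

/-- Lifting along a small extension with one-dimensional kernel `K x`. -/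
lemma rep_small_lift {K : Type u} [Field K] {B : Type u} [Ring B] [Algebra K B] (d : ℕ)
    (θ : B →ₐ[K] Matrix (Fin d) (Fin d) K)
    (H : ∀ (c : B → B → Matrix (Fin d) (Fin d) K),
      (∀ a b b', c (a + b) b' = c a b' + c b b') →
      (∀ a b b', c a (b + b') = c a b + c a b') →
      (∀ a (r : K) b, c a (r • b) = r • c a b) →
      (∀ (r : K) b, c (algebraMap K B r) b = 0) →
      (∀ a, c a 1 = 0) →
      (∀ a b b', θ a * c b b' - c (a * b) b' + c a (b * b') - c a b * θ b' = 0) →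
      ∃ h : B →ₗ[K] Matrix (Fin d) (Fin d) K,
        ∀ a b, h (a * b) = c a b + θ a * h b + h a * θ b)
    {R S : Type u} [CommRing R] [Algebra K R] [CommRing S] [Algebra K S]
    (f : R →ₐ[K] S) (hf : Function.Surjective f) (ρ : S →ₐ[K] K)
    (x : R) (hx0 : x ≠ 0) (hxf : f x = 0)
    (hxm : ∀ r, r * x = ρ (f r) • x) (hker : ∀ r, f r = 0 → ∃ l : K, r = l • x)
    (φ : B →ₐ[K] Matrix (Fin d) (Fin d) S) (hφ : ∀ b, (φ b).map ρ = θ b) :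
    ∃ ψ : B →ₐ[K] Matrix (Fin d) (Fin d) R, ∀ b, (ψ b).map f = φ b := by
  classical
  -- the inclusion of the kernel and a retraction
  let t : K →ₗ[K] R := LinearMap.toSpanSingleton K R x
  have ht : ∀ l, t l = l • x := fun l => rfl
  have htinj : Function.Injective t := smul_left_injective K hx0
  obtain ⟨τ, hτ⟩ := LinearMap.exists_leftInverse_of_injective t (LinearMap.ker_eq_bot.2 htinj)
  have hτt : ∀ l, τ (t l) = l := fun l => LinearMap.congr_fun hτ l
  have htτ : ∀ r, f r = 0 → t (τ r) = r := by
    intro r hr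
    obtain ⟨l, rfl⟩ := hker r hr
    rw [← ht, hτt]
  have hft : ∀ l, f (t l) = 0 := fun l => by rw [ht, map_smul, hxf, smul_zero]
  -- a unital linear section
  obtain ⟨g₀, hg₀⟩ := LinearMap.exists_rightInverse_of_surjective f.toLinearMap
    (LinearMap.range_eq_top.2 hf)
  have hg₀' : ∀ s, f (g₀ s) = s := fun s => LinearMap.congr_fun hg₀ s
  let g : S →ₗ[K] R := g₀ + ρ.toLinearMap.smulRight (1 - g₀ 1)
  have hgd : ∀ s, g s = g₀ s + ρ s • (1 - g₀ 1) := fun s => rfl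
  have hg1 : g 1 = 1 := by simp [hgd]
  have hfg : ∀ s, f (g s) = s := fun s => by simp [hgd, hg₀']
  -- matrix level
  let M := Matrix (Fin d) (Fin d) K
  let T : M →ₗ[K] Matrix (Fin d) (Fin d) R := t.mapMatrix
  let Tau : Matrix (Fin d) (Fin d) R →ₗ[K] M := τ.mapMatrix
  let F : Matrix (Fin d) (Fin d) R →ₐ[K] Matrix (Fin d) (Fin d) S := f.mapMatrix
  let σ : B →ₗ[K] Matrix (Fin d) (Fin d) R := g.mapMatrix ∘ₗ φ.toLinearMap
  have hσ : ∀ b, σ b = (φ b).map g := fun b => rfl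
  have hσ1 : σ 1 = 1 := by
    rw [hσ, map_one, Matrix.map_one _ (map_zero g) hg1]
  have hFσ : ∀ b, F (σ b) = φ b := by
    intro b
    ext i j
    exact hfg _
  have hFT : ∀ m, F (T m) = 0 := by
    intro m
    ext i j
    exact hft _
  have hTinj : Function.Injective T := by
    intro m m' h
    ext i j
    exact htinj (congrFun (congrFun h i) j)
  have hTT : ∀ m, F m = 0 → T (Tau m) = m := by
    intro m h
    ext i j
    exact htτ _ (congrFun (congrFun h i) j)
  have hσT : ∀ b m, σ b * T m = T (θ b * m) := by
    intro b m
    ext i j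
    change (σ b * T m) i j = t ((θ b * m) i j)
    rw [Matrix.mul_apply, Matrix.mul_apply, map_sum]
    refine Finset.sum_congr rfl fun l _ => ?_
    change g (φ b i l) * (m l j • x) = (θ b i l * m l j) • x
    rw [mul_smul_comm, hxm, hfg, ← hφ, smul_smul, mul_comm]
    rfl
  have hTσ : ∀ b m, T m * σ b = T (m * θ b) := by
    intro b m
    ext i j
    change (T m * σ b) i j = t ((m * θ b) i j)
    rw [Matrix.mul_apply, Matrix.mul_apply, map_sum]
    refine Finset.sum_congr rfl fun l _ => ?_
    change (m i l • x) * g (φ b l j) = (m i l * θ b l j) • x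
    rw [mul_comm, mul_smul_comm, hxm, hfg, ← hφ, smul_smul]
    rfl
  have hTTz : ∀ m m', T m * T m' = 0 := by
    intro m m'
    ext i j
    rw [Matrix.mul_apply]
    refine Finset.sum_eq_zero fun l _ => ?_
    change (m i l • x) * (m' l j • x) = 0
    rw [mul_smul_comm, hxm, map_smul, hxf]
    simp
  let c : B → B → M := fun a b => Tau (σ a * σ b - σ (a * b))
  have hTc : ∀ a b, T (c a b) = σ a * σ b - σ (a * b) := by
    intro a b
    apply hTT
    rw [map_sub, map_mul, hFσ, hFσ, hFσ, map_mul, sub_self]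
  obtain ⟨h, hh⟩ := H c
    (by
      intro a b b'
      apply hTinj
      rw [map_add, hTc, hTc, hTc, map_add, add_mul, add_mul, map_add]
      abel)
    (by
      intro a b b'
      apply hTinj
      rw [map_add, hTc, hTc, hTc, map_add, mul_add, mul_add, map_add]
      abel)
    (by
      intro a r b
      apply hTinj
      rw [map_smul, hTc, hTc, map_smul, mul_smul_comm, mul_smul_comm, map_smul, smul_sub])
    (by
      intro r b
      apply hTinj
      rw [map_zero, hTc, Algebra.algebraMap_eq_smul_one, map_smul, hσ1, smul_mul_assoc, one_mul,
        smul_mul_assoc, one_mul, map_smul, sub_self])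
    (by
      intro a
      apply hTinj
      rw [map_zero, hTc, hσ1, mul_one, mul_one, sub_self])
    (by
      intro a b b'
      apply hTinj
      rw [map_sub, map_add, map_sub, ← hσT, ← hTσ, hTc, hTc, hTc, hTc, map_zero, mul_assoc a b b']
      noncomm_ring)
  let ψ₀ : B →ₗ[K] Matrix (Fin d) (Fin d) R := σ + T ∘ₗ h
  have hψ₀ : ∀ b, ψ₀ b = σ b + T (h b) := fun b => rfl
  have hmul : ∀ a b, ψ₀ (a * b) = ψ₀ a * ψ₀ b := by
    intro a b
    rw [hψ₀, hψ₀, hψ₀, hh, map_add, map_add, hTc, ← hσT, ← hTσ, add_mul, mul_add, mul_add, hTTz]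
    abel
  have hh1 : h 1 = 0 := by
    have h1 := hh 1 1
    have hc1 : c 1 1 = 0 := by
      apply hTinj
      rw [map_zero, hTc, hσ1, mul_one, mul_one, hσ1, sub_self]
    rw [hc1, mul_one, map_one θ, one_mul, mul_one, zero_add] at h1
    simpa using h1
  have hone : ψ₀ 1 = 1 := by rw [hψ₀, hσ1, hh1, map_zero, add_zero]
  refine ⟨AlgHom.ofLinearMap ψ₀ hone hmul, fun b => ?_⟩
  change F (ψ₀ b) = φ b
  rw [hψ₀, map_add, hFσ, hFT, add_zero]

/-- Existence of a socle element in a nonzero ideal. -/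
lemma rep_exists_socle {R : Type u} [CommRing R] [IsLocalRing R] [IsArtinianRing R]
    (J : Ideal R) (hJ : J ≠ ⊥) :
    ∃ x ∈ J, x ≠ 0 ∧ ∀ r ∈ IsLocalRing.maximalIdeal R, r * x = 0 := by
  have hnil : ∃ N, (IsLocalRing.maximalIdeal R) ^ N = ⊥ := by
    obtain ⟨N, hN⟩ := IsArtinianRing.isNilpotent_jacobson_bot (R := R)
    refine ⟨N, ?_⟩
    rw [IsLocalRing.jacobson_eq_maximalIdeal (⊥ : Ideal R) bot_ne_top] at hN
    exact hN
  obtain ⟨N, hN⟩ := hnil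
  generalize IsLocalRing.maximalIdeal R = m at hN ⊢
  have hN' : m ^ N * J = ⊥ := by rw [hN, Ideal.bot_mul]
  clear hN
  obtain ⟨n, hn, hmin⟩ : ∃ n, m ^ (n + 1) * J = ⊥ ∧ m ^ n * J ≠ ⊥ := by
    induction N with
    | zero =>
      rw [pow_zero, one_mul] at hN'
      exact absurd hN' hJ
    | succ n ih =>
      by_cases h : m ^ n * J = ⊥
      · exact ih h
      · exact ⟨n, hN', h⟩
  obtain ⟨x, hx, hx0⟩ := Submodule.exists_mem_ne_zero_of_ne_bot hmin
  have hxJ : x ∈ J := (Ideal.mul_le_right (I := m ^ n) (J := J)) hx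
  refine ⟨x, hxJ, hx0, fun r hr => ?_⟩
  have h1 : r * x ∈ m * (m ^ n * J) := Ideal.mul_mem_mul hr hx
  rw [← mul_assoc, ← pow_succ', hn] at h1
  exact h1

/-- Lifting along any surjection of finite-dimensional local algebras. -/
lemma rep_full_lift {K : Type u} [Field K] {B : Type u} [Ring B] [Algebra K B] (d : ℕ)
    (θ : B →ₐ[K] Matrix (Fin d) (Fin d) K)
    (H : ∀ (c : B → B → Matrix (Fin d) (Fin d) K),
      (∀ a b b', c (a + b) b' = c a b' + c b b') →
      (∀ a b b', c a (b + b') = c a b + c a b') →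
      (∀ a (r : K) b, c a (r • b) = r • c a b) →
      (∀ (r : K) b, c (algebraMap K B r) b = 0) →
      (∀ a, c a 1 = 0) →
      (∀ a b b', θ a * c b b' - c (a * b) b' + c a (b * b') - c a b * θ b' = 0) →
      ∃ h : B →ₗ[K] Matrix (Fin d) (Fin d) K,
        ∀ a b, h (a * b) = c a b + θ a * h b + h a * θ b)
    {T : Type u} [CommRing T] [Algebra K T] (ρ : T →ₐ[K] K)
    (φ : B →ₐ[K] Matrix (Fin d) (Fin d) T) (hφ : ∀ b, (φ b).map ρ = θ b) (n : ℕ) :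
    ∀ (R : Type u) [CommRing R] [Algebra K R] [IsLocalRing R] [FiniteDimensional K R]
      (f : R →ₐ[K] T), Function.Surjective f → Module.finrank K R = n →
    ∃ ψ : B →ₐ[K] Matrix (Fin d) (Fin d) R, ∀ b, (ψ b).map f = φ b := by
  induction n using Nat.strong_induction_on with
  | _ n ih =>
  intro R _ _ _ _ f hf hn
  have : IsArtinianRing R := IsArtinianRing.of_finite K R
  by_cases hJ : RingHom.ker f = ⊥
  · have hinj : Function.Injective f := (RingHom.injective_iff_ker_eq_bot f).2 hJ
    let E := AlgEquiv.ofBijective f ⟨hinj, hf⟩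
    refine ⟨E.symm.toAlgHom.mapMatrix.comp φ, fun b => ?_⟩
    ext i j
    exact E.apply_symm_apply (φ b i j)
  · obtain ⟨x, hxJ, hx0, hxm⟩ := rep_exists_socle _ hJ
    rw [RingHom.mem_ker] at hxJ
    have hmx : ∀ r, r * x = ρ (f r) • x := by
      intro r
      have h1 : r - algebraMap K R (ρ (f r)) ∈ IsLocalRing.maximalIdeal R := by
        rw [IsLocalRing.mem_maximalIdeal, mem_nonunits_iff]
        intro hu
        have := (hu.map f).map ρ
        simp at this
      have h2 := hxm _ h1
      rw [sub_mul, sub_eq_zero] at h2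
      rw [h2, Algebra.smul_def]
    let J : Ideal R := Ideal.span {x}
    have hJf : ∀ a ∈ J, f a = 0 := by
      intro a ha
      obtain ⟨r, rfl⟩ := Ideal.mem_span_singleton'.1 ha
      rw [map_mul, hxJ, mul_zero]
    let f' : R ⧸ J →ₐ[K] T := Ideal.Quotient.liftₐ J f hJf
    have hf'q : ∀ r, f' (Ideal.Quotient.mkₐ K J r) = f r := fun r => rfl
    have hf' : Function.Surjective f' := fun y => by
      obtain ⟨r, rfl⟩ := hf y
      exact ⟨Ideal.Quotient.mkₐ K J r, rfl⟩
    have : Nontrivial (R ⧸ J) := (ρ.comp f').toRingHom.domain_nontrivial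
    have : IsLocalRing (R ⧸ J) :=
      IsLocalRing.of_surjective' (Ideal.Quotient.mk J) Ideal.Quotient.mk_surjective
    have hlt : Module.finrank K (R ⧸ J) < n := by
      rw [← hn]
      have h1 := Submodule.finrank_quotient_add_finrank (J.restrictScalars K)
      have h2 : 0 < Module.finrank K (J.restrictScalars K) := by
        rw [Module.finrank_pos_iff_exists_ne_zero]
        refine ⟨⟨x, Ideal.mem_span_singleton_self x⟩, fun h => hx0 (congrArg Subtype.val h)⟩
      have h3 : Module.finrank K (R ⧸ J) = Module.finrank K (R ⧸ J.restrictScalars K) := rfl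
      omega
    obtain ⟨ψ', hψ'⟩ := ih _ hlt (R ⧸ J) f' hf' rfl
    obtain ⟨ψ, hψ⟩ := rep_small_lift d θ H (Ideal.Quotient.mkₐ K J) (Ideal.Quotient.mkₐ_surjective K J)
      (ρ.comp f') x hx0 (Ideal.Quotient.eq_zero_iff_mem.2 (Ideal.mem_span_singleton_self x))
      hmx (fun r hr => by
        obtain ⟨a, rfl⟩ := Ideal.mem_span_singleton'.1 (Ideal.Quotient.eq_zero_iff_mem.1 hr)
        exact ⟨_, hmx a⟩) ψ' (fun b => by
        rw [← hφ, ← hψ']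
        rfl)
    refine ⟨ψ, fun b => ?_⟩
    rw [← hψ', ← hψ]
    rfl


/-- Let `B` be a finitely generated algebra over an algebraically closed
field `K` with a complete set of orthogonal idempotents `e₁, …, eₙ`, and let
`θ : B → M_d(K)` be a `K`-point of the representation scheme (the idempotents `eᵢ` being
sent to the prescribed idempotents `θ(eᵢ)`), with corresponding `B`-module `X`.  If
`Ext²_B(X, X) = 0`, then `θ` is a smooth point of the representation scheme, formulated
via the infinitesimal lifting criterion: every `K`-algebra map `B → M_d(R/I)` lying over
`θ` and compatible with the idempotents, for `R` a finite-dimensional commutative local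
`K`-algebra and `I` a square-zero ideal, lifts to a `K`-algebra map `B → M_d(R)`
compatible with the idempotents. -/
theorem smooth_point_of_ext2_vanishing
    {K : Type u} [Field K] [IsAlgClosed K]
    {B : Type u} [Ring B] [Algebra K B] (hfg : Algebra.FiniteType K B)
    (n d : ℕ) (e : Fin n → B)
    (horth : ∀ i j, e i * e j = if i = j then e i else 0)
    (hsum : ∑ i, e i = 1)
    (θ : B →ₐ[K] Matrix (Fin d) (Fin d) K)
    -- X is the B-module given by the representation θ
    (X : Type u) [AddCommGroup X] [Module B X]
    (ξ : X ≃+ (Fin d → K))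
    (hX : ∀ (b : B) (x : X), ξ (b • x) = (θ b).mulVec (ξ x))
    -- Ext²_B(X, X) = 0, via dimension shifting: for every syzygy Z of X,
    -- every extension of Z by X splits
    (hext2 : ∀ (Z P : Type u) (_ : AddCommGroup Z) (_ : Module B Z)
      (_ : AddCommGroup P) (_ : Module B P), Module.Projective B P →
      ∀ (ι : Z →ₗ[B] P) (π : P →ₗ[B] X), Function.Injective ι →
        Function.Surjective π → Function.Exact ι π →
      ∀ (E : Type u) (_ : AddCommGroup E) (_ : Module B E)
        (f : X →ₗ[B] E) (g : E →ₗ[B] Z), Function.Injective f →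
        Function.Surjective g → Function.Exact f g →
        ∃ s : E →ₗ[B] X, s.comp f = LinearMap.id) :
    -- smoothness at θ: the infinitesimal lifting criterion for square-zero extensions
    ∀ (R : Type u) (_ : CommRing R) (_ : Algebra K R) (_ : IsLocalRing R)
      (_ : FiniteDimensional K R) (I : Ideal R), I ^ 2 = ⊥ →
      ∀ (φ : B →ₐ[K] Matrix (Fin d) (Fin d) (R ⧸ I)) (ρ : (R ⧸ I) →ₐ[K] K),
        (∀ b, (φ b).map ρ = θ b) →
        (∀ i, φ (e i) = (θ (e i)).map (algebraMap K (R ⧸ I))) →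
        ∃ ψ : B →ₐ[K] Matrix (Fin d) (Fin d) R,
          (∀ b, (ψ b).map (Ideal.Quotient.mk I) = φ b) ∧
          (∀ i, ψ (e i) = (θ (e i)).map (algebraMap K R)) := by
  intro R _ _ _ _ I hI φ ρ hφ hφe
  classical
  obtain ⟨ψ, hψ⟩ := rep_full_lift d θ
    (fun c cl cr crs csc c1r hc => coboundary d θ X ξ hX hext2 c cl cr crs csc c1r hc)
    ρ φ hφ _ R (Ideal.Quotient.mkₐ K I) (Ideal.Quotient.mkₐ_surjective K I) rfl
  -- conjugate to fix the idempotents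
  let F : Matrix (Fin d) (Fin d) R →ₐ[K] Matrix (Fin d) (Fin d) (R ⧸ I) :=
    (Ideal.Quotient.mkₐ K I).mapMatrix
  have hF : ∀ b, F (ψ b) = φ b := hψ
  let Θ : B →ₐ[K] Matrix (Fin d) (Fin d) R := (Algebra.ofId K R).mapMatrix.comp θ
  have hΘ : ∀ b, Θ b = (θ b).map (algebraMap K R) := fun b => rfl
  have hFΘ : ∀ i, F (Θ (e i)) = φ (e i) := by
    intro i
    rw [hφe]
    rfl
  let u : Matrix (Fin d) (Fin d) R := ∑ i, Θ (e i) * ψ (e i)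
  have hFu : F u = 1 := by
    simp only [u, map_sum, map_mul, hF, hFΘ]
    rw [← map_one φ, ← hsum, map_sum]
    refine Finset.sum_congr rfl fun i _ => ?_
    rw [← map_mul, horth, if_pos rfl]
  have hsq : (u - 1) * (u - 1) = 0 := by
    have hm : ∀ i j, (u - 1) i j ∈ I := by
      intro i j
      have : F (u - 1) = 0 := by rw [map_sub, hFu, map_one, sub_self]
      exact Ideal.Quotient.eq_zero_iff_mem.1 (congrFun (congrFun this i) j)
    ext i j
    rw [Matrix.mul_apply]
    refine Finset.sum_eq_zero fun l _ => ?_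
    have := Ideal.mul_mem_mul (hm i l) (hm l j)
    rw [← pow_two, hI] at this
    simpa using this
  let v : Matrix (Fin d) (Fin d) R := 1 - (u - 1)
  have huv : u * v = 1 := by
    have : u * v = 1 - (u - 1) * (u - 1) := by simp only [v]; noncomm_ring
    rw [this, hsq, sub_zero]
  have hvu : v * u = 1 := by
    have : v * u = 1 - (u - 1) * (u - 1) := by simp only [v]; noncomm_ring
    rw [this, hsq, sub_zero]
  have hFv : F v = 1 := by
    simp only [v, map_sub, hFu, map_one, sub_self, sub_zero]
  have hconj : ∀ i, u * ψ (e i) = Θ (e i) * u := by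
    intro i
    simp only [u, Finset.sum_mul, Finset.mul_sum]
    rw [Finset.sum_eq_single i, Finset.sum_eq_single i]
    · rw [mul_assoc, ← map_mul, ← mul_assoc, ← map_mul, horth, if_pos rfl]
    · intro j _ hj
      rw [← mul_assoc, ← map_mul, horth, if_neg hj.symm, map_zero, zero_mul]
    · simp
    · intro j _ hj
      rw [mul_assoc, ← map_mul, horth, if_neg hj, map_zero, mul_zero]
    · simp
  let L : B →ₗ[K] Matrix (Fin d) (Fin d) R :=
    LinearMap.mulRight K v ∘ₗ LinearMap.mulLeft K u ∘ₗ ψ.toLinearMap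
  have hL : ∀ b, L b = u * ψ b * v := fun b => rfl
  refine ⟨AlgHom.ofLinearMap L (by rw [hL, map_one, mul_one, huv]) (fun a b => ?_),
    fun b => ?_, fun i => ?_⟩
  · rw [hL, hL, hL, map_mul]
    calc u * (ψ a * ψ b) * v = u * ψ a * 1 * ψ b * v := by noncomm_ring
      _ = u * ψ a * (v * u) * ψ b * v := by rw [hvu]
      _ = u * ψ a * v * (u * ψ b * v) := by noncomm_ring
  · change F (L b) = φ b
    rw [hL, map_mul, map_mul, hFu, hFv, hF, one_mul, mul_one]
  · change L (e i) = _
    rw [hL, hconj, mul_assoc, huv, mul_one, hΘ]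
end
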